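/- Let X ⊂ ℙ⁴ be an integral hypersurface over ℂ such that through a general point of X there pass only finitely many lines contained in X, and let d denote the number of such lines through a general point. Then d ≤ 6, and if d = 6 then X is a (not necessarily smooth) cubic hypersurface. -/

import Mathlib

/-!
Formalisation of statements from "The Fano surface of a smooth cubic threefold
is the unique surface of minimal cohomology class in its intermediate Jacobian"
(after Clemens–Griffiths, Debarre, Höring).

Notions that are not available in Mathlib (intermediate Jacobians, effective
algebraic cycles and their cohomology classes, Fano surfaces, Chow schemes, …)
are axiomatised by structures / parameters whose fields are documented below.
-/

noncomputable section

/-- Abstract formalism of effective algebraic cycles, with rational cohomology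
classes, on a principally polarised abelian variety (or on a semi-abelian rank
one degeneration of one).  The field `theta` is the cohomology class of the
principal polarisation `Θ`. -/
structure CycleTheory where
  /-- the points of the (semi-)abelian variety -/
  A : Type
  [instAddCommGroup : AddCommGroup A]
  /-- the rational cohomology ring (even degrees) in which cycle classes live -/
  H : Type
  [instCommRing : CommRing H]
  [instModule : Module ℚ H]
  /-- the class of the principal polarisation `Θ` -/
  theta : H
  /-- the effective algebraic cycles of dimension `d` -/
  Cyc : ℕ → Type
  /-- the cohomology class of an effective cycle -/
  cls : {d : ℕ} → Cyc d → H
  /-- the support of an effective cycle -/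
  supp : {d : ℕ} → Cyc d → Set A
  /-- the translate of an effective cycle by a point of `A` -/
  tr : {d : ℕ} → A → Cyc d → Cyc d
  /-- the image of an effective cycle under the inversion `x ↦ -x` -/
  neg : {d : ℕ} → Cyc d → Cyc d
  /-- integrality of an effective cycle: it is reduced and irreducible and
  occurs with multiplicity one -/
  IsIntegralCyc : {d : ℕ} → Cyc d → Prop

attribute [instance] CycleTheory.instAddCommGroup CycleTheory.instCommRing
  CycleTheory.instModule

/-- The minimal cohomology class `Θ^k / k!`. -/
def CycleTheory.minClass (T : CycleTheory) (k : ℕ) : T.H :=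
  ((Nat.factorial k : ℚ))⁻¹ • T.theta ^ k

/-- The algebra of polynomial functions on a complex vector space, generated by
the linear functionals. -/
def polyFuns (V : Type) [AddCommGroup V] [Module ℂ V] : Subalgebra ℂ (V → ℂ) :=
  Algebra.adjoin ℂ {l : V → ℂ | IsLinearMap ℂ l}

/-- The Zariski topology on a complex vector space: the topology generated by
the complements of zero sets of polynomial functions. -/
def zariskiVS (V : Type) [AddCommGroup V] [Module ℂ V] : TopologicalSpace V :=
  TopologicalSpace.generateFrom {U | ∃ g ∈ polyFuns V, U = {v | g v ≠ 0}}

/-- `U` is a dense (relatively) open subset of `T` for the topology `t`; a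
property holding on such a `U` holds *generically* on `T`. -/
def GenericInT {α : Type} (t : TopologicalSpace α) (T U : Set α) : Prop :=
  U ⊆ T ∧ (∃ W : Set α, t.IsOpen W ∧ U = T ∩ W) ∧
    ∀ W : Set α, t.IsOpen W → (T ∩ W).Nonempty → (U ∩ W).Nonempty

/-- Cubic forms in five variables, i.e. the space `H⁰(ℙ⁴, O(3))`; a nonzero
cubic form cuts out a cubic hypersurface `X ⊂ ℙ⁴`. -/
abbrev CubicForm : Type := MvPolynomial.homogeneousSubmodule (Fin 5) ℂ 3

/-- A cubic form defines a *smooth* cubic threefold iff it is nonzero and its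
partial derivatives have no common zero besides the origin. -/
def IsSmoothCubicForm (f : CubicForm) : Prop :=
  (f : MvPolynomial (Fin 5) ℂ) ≠ 0 ∧
    ∀ v : Fin 5 → ℂ,
      (∀ i : Fin 5, MvPolynomial.eval v
        (MvPolynomial.pderiv i (f : MvPolynomial (Fin 5) ℂ)) = 0) → v = 0

/-- The complex projective space `ℙ⁴`. -/
abbrev P4 : Type := Projectivization ℂ (Fin 5 → ℂ)

/-- The set of points of `ℙ⁴` lying in the projectivisation of a linear
subspace `W ⊆ ℂ⁵`. -/
def projSet (W : Submodule ℂ (Fin 5 → ℂ)) : Set P4 := {x | x.submodule ≤ W}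

/-- A line in `ℙ⁴`: the projectivisation of a two-dimensional linear
subspace of `ℂ⁵`. -/
def IsLine (L : Set P4) : Prop :=
  ∃ W : Submodule ℂ (Fin 5 → ℂ), Module.finrank ℂ W = 2 ∧ L = projSet W

/-- The projective zero locus in `ℙ⁴` of a (homogeneous) polynomial. -/
def zeroLocusP (f : MvPolynomial (Fin 5) ℂ) : Set P4 :=
  {x | ∀ v : Fin 5 → ℂ, v ∈ x.submodule → MvPolynomial.eval v f = 0}

/-- The Zariski topology on `ℙ⁴`. -/
def zariskiP4 : TopologicalSpace P4 :=
  TopologicalSpace.generateFrom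
    {U | ∃ (n : ℕ) (f : MvPolynomial (Fin 5) ℂ), f.IsHomogeneous n ∧ U = (zeroLocusP f)ᶜ}

/-- Two subsets of `ℙ⁴` are projectively equivalent if a linear automorphism
of `ℂ⁵` carries one onto the other. -/
def ProjEquiv (A B : Set P4) : Prop :=
  ∃ g : (Fin 5 → ℂ) ≃ₗ[ℂ] (Fin 5 → ℂ),
    Projectivization.map g.toLinearMap g.injective '' A = B

/-- `v ≠ 0` represents an ordinary double point of the projective hypersurface
`{f = 0} ⊂ ℙ⁴`: the point is singular and the Hessian of `f` at `v` has
maximal possible rank `4`. -/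
def IsODPAt (f : MvPolynomial (Fin 5) ℂ) (v : Fin 5 → ℂ) : Prop :=
  v ≠ 0 ∧ MvPolynomial.eval v f = 0 ∧
    (∀ i : Fin 5, MvPolynomial.eval v (MvPolynomial.pderiv i f) = 0) ∧
    (Matrix.of fun i j : Fin 5 =>
        MvPolynomial.eval v (MvPolynomial.pderiv i (MvPolynomial.pderiv j f))).rank = 4

/-- The cubic form `f` defines a cubic threefold with a *unique* ordinary
double point. -/
def HasUniqueODP (f : CubicForm) : Prop :=
  ∃ v : Fin 5 → ℂ, IsODPAt (f : MvPolynomial (Fin 5) ℂ) v ∧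
    ∀ w : Fin 5 → ℂ, w ≠ 0 →
      (∀ i : Fin 5, MvPolynomial.eval w
        (MvPolynomial.pderiv i (f : MvPolynomial (Fin 5) ℂ)) = 0) →
      ∃ c : ℂ, w = c • v

/-- The unit disc `Δ ⊂ ℂ`. -/
abbrev UnitDisc : Type := ↥(Metric.ball (0 : ℂ) 1)

/-- The origin `0 ∈ Δ`. -/
def d0 : UnitDisc := ⟨0, Metric.mem_ball_self one_pos⟩

namespace GeneralLines

open MvPolynomial KaehlerDifferential

section Extension

variable {k S K M : Type} [CommRing k] [CommRing S] [CommRing K]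
  [Algebra k S] [Algebra k K] [Algebra S K] [IsScalarTower k S K] [Algebra.FormallyEtale S K]
  [AddCommGroup M] [Module k M] [Module S M] [Module K M]
  [IsScalarTower k S M] [IsScalarTower k K M] [IsScalarTower S K M]

theorem exists_derivation_extending (d : Derivation k S M) :
    ∃ D : Derivation k K M, ∀ a, D (algebraMap S K a) = d a := by
  have hb := isBaseChange_of_formallyEtale k S K
  refine ⟨(hb.lift d.liftKaehlerDifferential).compDer (KaehlerDifferential.D k K), fun a => ?_⟩
  have h := hb.lift_eq d.liftKaehlerDifferential (KaehlerDifferential.D k S a)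
  rw [KaehlerDifferential.map_D] at h
  simpa using h

theorem derivation_eq_zero_of_algebraMap {D : Derivation k K M}
    (h : ∀ a, D (algebraMap S K a) = 0) : D = 0 := by
  have hb := isBaseChange_of_formallyEtale k S K
  have h0 : D.liftKaehlerDifferential = 0 := by
    refine hb.algHom_ext _ _ fun x => ?_
    have : (D.liftKaehlerDifferential.restrictScalars S) ∘ₗ
        KaehlerDifferential.map k k S K = 0 := by
      refine Derivation.liftKaehlerDifferential_unique _ _ ?_
      ext a
      simpa using h a
    exact LinearMap.congr_fun this x
  ext a
  rw [← D.liftKaehlerDifferential_comp_D, h0]; rfl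

end Extension

theorem formallyEtale_of_isTranscendenceBasis {k K ι : Type} [Field k] [Field K] [CharZero K]
    [Algebra k K] [Algebra (MvPolynomial ι k) K] {x : ι → K} (hx : IsTranscendenceBasis k x)
    (h : ∀ a, algebraMap (MvPolynomial ι k) K a = aeval x a) :
    Algebra.FormallyEtale (MvPolynomial ι k) K := by
  have hinj : Function.Injective (algebraMap (MvPolynomial ι k) K) := by
    intro a b hab
    rw [h, h] at hab
    exact hx.1 hab
  have : FaithfulSMul (MvPolynomial ι k) K := (faithfulSMul_iff_algebraMap_injective _ _).2 hinj
  let F := FractionRing (MvPolynomial ι k)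
  let _ : Algebra F K := FractionRing.liftAlgebra _ K
  have h1 : Algebra.FormallyEtale (MvPolynomial ι k) F :=
    Algebra.FormallyEtale.of_isLocalization (nonZeroDivisors (MvPolynomial ι k))
  have h2 : Algebra.IsAlgebraic (MvPolynomial ι k) K := by
    have := hx.isAlgebraic
    refine Algebra.IsAlgebraic.of_ringHom_of_comp_eq hx.1.aevalEquiv.toRingEquiv (RingHom.id K)
      hx.1.aevalEquiv.surjective Function.injective_id ?_
    refine RingHom.ext fun a => ?_
    simp [h]
  have h3 : Algebra.IsAlgebraic F K :=
    (IsFractionRing.comap_isAlgebraic_iff (A := MvPolynomial ι k) (K := F) (C := K)).1 h2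
  have : CharZero F := (algebraMap F K).charZero
  have h4 : Algebra.FormallyEtale F K := Algebra.FormallyEtale.of_isSeparable F K
  exact Algebra.FormallyEtale.comp _ F K

/-- Three commuting derivations of `ℂ` together with coordinates dual to them. -/
structure Frame where
  /-- the derivations -/
  D : Fin 3 → Derivation ℤ ℂ ℂ
  /-- the dual coordinates -/
  p : Fin 3 → ℂ
  D_p : ∀ i j, D i (p j) = if i = j then 1 else 0
  comm : ∀ i j a, D i (D j a) = D j (D i a)

theorem exists_embedding_isTranscendenceBasis (k : Subfield ℂ)
    (hk : Cardinal.mk k ≤ Cardinal.aleph0) :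
    ∃ (ι : Type) (x : ι → ℂ) (e : Fin 3 → ι),
      IsTranscendenceBasis k x ∧ Function.Injective e := by
  obtain ⟨ι, x, hx⟩ := exists_isTranscendenceBasis' k ℂ
  have hc : Cardinal.mk ℂ = Cardinal.mk ι :=
    IsAlgClosed.cardinal_eq_cardinal_transcendence_basis_of_aleph0_lt' x hx hk
      (by rw [Cardinal.mk_complex]; exact Cardinal.aleph0_lt_continuum)
  have : Infinite ι := by
    rw [Cardinal.infinite_iff, ← hc, Cardinal.mk_complex]
    exact Cardinal.aleph0_le_continuum
  exact ⟨ι, x, fun i => Infinite.natEmbedding ι i, hx,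
    fun i j h => Fin.ext ((Infinite.natEmbedding ι).injective h)⟩

theorem exists_frame (s : Set ℂ) (hs : s.Countable) :
    ∃ F : Frame, ∀ i, ∀ a ∈ s, F.D i a = 0 := by
  let k : Subfield ℂ := Subfield.closure s
  have hk : Cardinal.mk k ≤ Cardinal.aleph0 :=
    (Subfield.cardinalMk_closure_le_max s).trans (max_le hs.le_aleph0 le_rfl)
  obtain ⟨ι, x, e, hx, he⟩ := exists_embedding_isTranscendenceBasis k hk
  let _ : Algebra (MvPolynomial ι k) ℂ := (aeval x).toAlgebra
  have halg : ∀ a, algebraMap (MvPolynomial ι k) ℂ a = aeval x a := fun a => rfl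
  have : IsScalarTower k (MvPolynomial ι k) ℂ := IsScalarTower.of_algebraMap_eq' (by
    ext a; simp [halg])
  have := formallyEtale_of_isTranscendenceBasis hx halg
  classical
  let d : Fin 3 → Derivation k (MvPolynomial ι k) ℂ := fun i =>
    mkDerivation k fun b => if b = e i then 1 else 0
  choose D hD using fun i => exists_derivation_extending (K := ℂ) (d i)
  have hDx : ∀ i b, D i (x b) = if b = e i then 1 else 0 := fun i b => by
    have := hD i (X b)
    simpa [halg, d, mkDerivation_X] using this
  have hcomm : ∀ i j, ⁅D i, D j⁆ = 0 := fun i j => by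
    refine derivation_eq_zero_of_algebraMap (S := MvPolynomial ι k) fun a => ?_
    have : (⁅D i, D j⁆).compAlgebraMap (MvPolynomial ι k) = 0 := by
      refine MvPolynomial.derivation_ext fun b => ?_
      simp only [Derivation.compAlgebraMap_apply, halg, aeval_X, Derivation.commutator_apply, hDx]
      split_ifs <;> simp
    exact DFunLike.congr_fun this a
  refine ⟨⟨fun i => (D i).restrictScalars ℤ, fun i => x (e i), fun i j => ?_, fun i j a => ?_⟩,
    fun i a ha => ?_⟩
  · simp [hDx, he.eq_iff, eq_comm]
  · have := DFunLike.congr_fun (hcomm i j) a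
    simpa [Derivation.commutator_apply, sub_eq_zero] using this
  · exact (D i).map_algebraMap (⟨a, Subfield.subset_closure ha⟩ : k)

section Coeffwise

variable {σ : Type} (D : Derivation ℤ ℂ ℂ)

/-- A derivation of `ℂ` acting on the coefficients of polynomials. -/
def coeffwise : Derivation ℤ (MvPolynomial σ ℂ) (MvPolynomial σ ℂ) :=
  Derivation.mk'
    (AddMonoidHom.toIntLinearMap
      { toFun := fun P => AddMonoidAlgebra.map (D : ℂ →+ ℂ) P
        map_zero' := by ext m; exact D.map_zero
        map_add' := fun P Q => by ext m; exact D.map_add _ _ })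
    (fun P Q => by
      classical
      ext m
      change D (coeff m (P * Q)) = _
      rw [smul_eq_mul, smul_eq_mul, coeff_add, mul_comm Q, coeff_mul, coeff_mul, coeff_mul, map_sum,
        ← Finset.sum_add_distrib]
      refine Finset.sum_congr rfl fun x _ => ?_
      change _ = coeff x.1 P * D (coeff x.2 Q) + D (coeff x.1 P) * coeff x.2 Q
      rw [D.leibniz, smul_eq_mul, smul_eq_mul]; ring)

theorem coeff_coeffwise (m : σ →₀ ℕ) (P : MvPolynomial σ ℂ) :
    coeff m (coeffwise D P) = D (coeff m P) := rfl

theorem coeffwise_C (a : ℂ) : coeffwise D (C a : MvPolynomial σ ℂ) = C (D a) := by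
  classical
  ext m
  rw [coeff_coeffwise, coeff_C, coeff_C]
  split_ifs <;> simp

theorem coeffwise_X (i : σ) : coeffwise D (X i : MvPolynomial σ ℂ) = 0 := by
  classical
  ext m
  rw [coeff_coeffwise, coeff_X, coeff_zero]
  split_ifs <;> simp

theorem coeffwise_comm {D E : Derivation ℤ ℂ ℂ} (h : ∀ a, D (E a) = E (D a))
    (P : MvPolynomial σ ℂ) : coeffwise D (coeffwise E P) = coeffwise E (coeffwise D P) := by
  ext m
  simp only [coeff_coeffwise, h]

theorem pderiv_coeffwise (i : σ) (P : MvPolynomial σ ℂ) :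
    pderiv i (coeffwise D P) = coeffwise D (pderiv i P) := by
  ext m
  rw [coeff_coeffwise, coeff_pderiv, coeff_pderiv, coeff_coeffwise, D.leibniz]
  have : D ((m i : ℂ) + 1) = 0 := by simp
  rw [this]
  simp [mul_comm]

theorem isHomogeneous_coeffwise {P : MvPolynomial σ ℂ} {n : ℕ} (h : P.IsHomogeneous n) :
    (coeffwise D P).IsHomogeneous n := fun m hm => h fun h0 => hm (by
  rw [coeff_coeffwise, h0, map_zero])

theorem coeffwise_eq_zero {P : MvPolynomial σ ℂ} (h : ∀ m, D (coeff m P) = 0) :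
    coeffwise D P = 0 := by
  ext m; rw [coeff_coeffwise, h, coeff_zero]

end Coeffwise

/-- The polynomial ring in the three tangent variables. -/
abbrev Tern : Type := MvPolynomial (Fin 3) ℂ

namespace Frame

variable (F : Frame)

/-- The universal first order operator `∑ X i • D i`. -/
def xi (P : Tern) : Tern := ∑ i, X i * coeffwise (F.D i) P

theorem pderiv_xi (m : Fin 3) (P : Tern) :
    pderiv m (F.xi P) = coeffwise (F.D m) P + F.xi (pderiv m P) := by
  classical
  simp only [xi, map_sum, pderiv_mul, Finset.sum_add_distrib, pderiv_X, pderiv_coeffwise]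
  congr 1
  simp [Pi.single_apply]

theorem coeffwise_xi (m : Fin 3) (P : Tern) :
    coeffwise (F.D m) (F.xi P) = F.xi (coeffwise (F.D m) P) := by
  simp only [xi, map_sum, Derivation.leibniz, coeffwise_X, mul_zero, add_zero, smul_eq_mul]
  refine Finset.sum_congr rfl fun i _ => ?_
  rw [coeffwise_comm (F.comm m i)]

theorem xi_mul (P Q : Tern) : F.xi (P * Q) = P * F.xi Q + Q * F.xi P := by
  simp only [xi, Finset.mul_sum, ← Finset.sum_add_distrib, Derivation.leibniz, smul_eq_mul]
  refine Finset.sum_congr rfl fun i _ => ?_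
  ring

theorem isHomogeneous_xi {P : Tern} {n : ℕ} (h : P.IsHomogeneous n) :
    (F.xi P).IsHomogeneous (n + 1) := by
  refine IsHomogeneous.sum _ _ _ fun i _ => ?_
  rw [add_comm]
  exact (isHomogeneous_X _ _).mul (isHomogeneous_coeffwise _ h)

/-- The homogeneous parts of the formal Taylor expansion of `y`. -/
def taylor (y : ℂ) : ℕ → Tern
  | 0 => C y
  | k + 1 => C (((k + 1 : ℚ)⁻¹ : ℚ) : ℂ) * F.xi (taylor y k)

theorem isHomogeneous_taylor (y : ℂ) (k : ℕ) : (F.taylor y k).IsHomogeneous k := by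
  induction k with
  | zero => exact isHomogeneous_C _ _
  | succ k ih => simpa [taylor] using (isHomogeneous_C (Fin 3) _).mul (F.isHomogeneous_xi ih)

theorem xi_taylor (y : ℂ) (k : ℕ) :
    F.xi (F.taylor y k) = C ((k + 1 : ℕ) : ℂ) * F.taylor y (k + 1) := by
  rw [taylor, ← mul_assoc, ← C_mul]
  have : ((k + 1 : ℕ) : ℂ) * ((((k : ℚ) + 1)⁻¹ : ℚ) : ℂ) = 1 := by
    push_cast
    exact mul_inv_cancel₀ (by exact_mod_cast k.succ_ne_zero)
  rw [this, C_1, one_mul]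

theorem pderiv_taylor_succ (y : ℂ) (m : Fin 3) (k : ℕ) :
    pderiv m (F.taylor y (k + 1)) = coeffwise (F.D m) (F.taylor y k) := by
  induction k with
  | zero =>
    classical
    simp [taylor, coeffwise_C, xi, Pi.single_apply]
  | succ k ih =>
    have h1 : F.xi (pderiv m (F.taylor y (k + 1))) =
        C ((k + 1 : ℕ) : ℂ) * coeffwise (F.D m) (F.taylor y (k + 1)) := by
      rw [ih, ← coeffwise_xi, xi_taylor, Derivation.leibniz, coeffwise_C, Derivation.map_natCast]
      simp
    rw [taylor, pderiv_C_mul, pderiv_xi, h1]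
    have h2 : C ((((k + 1 : ℕ) + 1 : ℚ)⁻¹ : ℚ) : ℂ) * (C ((k + 1 : ℕ) : ℂ) + 1) = (1 : Tern) := by
      rw [← C_1, ← C_add, ← C_mul]
      congr 1
      push_cast
      exact inv_mul_cancel₀ (by exact_mod_cast (k + 1).succ_ne_zero)
    linear_combination coeffwise (F.D m) (F.taylor y (k + 1)) * h2

end Frame

theorem eq_zero_of_isHomogeneous_of_pderiv {σ : Type} [Fintype σ] {P : MvPolynomial σ ℂ} {n : ℕ}
    (h : P.IsHomogeneous (n + 1)) (h0 : ∀ i, pderiv i P = 0) : P = 0 := by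
  have := h.sum_X_mul_pderiv
  simp only [h0, mul_zero, Finset.sum_const_zero] at this
  have h2 : ((n + 1 : ℕ)) • P = 0 := this.symm
  exact (smul_eq_zero.1 h2).resolve_left n.succ_ne_zero

/-- An additive map acting on the coefficients of power series. -/
def seriesMap {R : Type} [CommRing R] (d : R →+ R) : PowerSeries R →+ PowerSeries R where
  toFun P := PowerSeries.mk fun n => d (PowerSeries.coeff n P)
  map_zero' := by ext m; simp
  map_add' P Q := by ext m; simp

section SeriesMap

variable {R : Type} [CommRing R] (d : R →+ R)

theorem coeff_seriesMap (n : ℕ) (P : PowerSeries R) :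
    PowerSeries.coeff n (seriesMap d P) = d (PowerSeries.coeff n P) :=
  PowerSeries.coeff_mk n fun n => d (PowerSeries.coeff n P)

theorem seriesMap_mul (hd : ∀ a b, d (a * b) = a * d b + b * d a) (P Q : PowerSeries R) :
    seriesMap d (P * Q) = P * seriesMap d Q + Q * seriesMap d P := by
  ext m
  rw [coeff_seriesMap, map_add, mul_comm Q, PowerSeries.coeff_mul, PowerSeries.coeff_mul,
    PowerSeries.coeff_mul, map_sum, ← Finset.sum_add_distrib]
  refine Finset.sum_congr rfl fun x _ => ?_
  rw [coeff_seriesMap, coeff_seriesMap, hd]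
  ring

theorem seriesMap_C (a : R) : seriesMap d (PowerSeries.C a) = PowerSeries.C (d a) := by
  ext n
  rw [coeff_seriesMap, PowerSeries.coeff_C, PowerSeries.coeff_C]
  split_ifs <;> simp

theorem seriesMap_X (hd : d 1 = 0) : seriesMap d PowerSeries.X = 0 := by
  ext n
  rw [coeff_seriesMap, PowerSeries.coeff_X]
  split_ifs <;> simp [hd]

end SeriesMap

namespace Frame

variable (F : Frame) (y : ℂ)

/-- The coordinates of the base point. -/
def pt : Fin 5 → ℂ := Fin.cons y (Fin.cons 1 F.p)

/-- The coordinates of the formal expansion at the base point. -/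
def jetCoord : Fin 5 → PowerSeries Tern :=
  Fin.cons (PowerSeries.mk (F.taylor y)) (Fin.cons 1 fun j =>
    PowerSeries.C (C (F.p j)) + PowerSeries.X * PowerSeries.C (X j))

/-- Expansion of a polynomial along the formal graph. -/
def jet : MvPolynomial (Fin 5) ℂ →ₐ[ℂ] PowerSeries Tern := aeval (F.jetCoord y)

theorem jet_C (a : ℂ) : F.jet y (C a) = PowerSeries.C (C a) := by
  rw [jet, aeval_C, IsScalarTower.algebraMap_apply ℂ Tern (PowerSeries Tern)]; rfl

theorem jet_X (i : Fin 5) : F.jet y (X i) = F.jetCoord y i := by rw [jet, aeval_X]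

/-- Coefficientwise partial derivative of a power series. -/
abbrev pd (m : Fin 3) : PowerSeries Tern →+ PowerSeries Tern :=
  seriesMap (pderiv (R := ℂ) m : Tern →+ Tern)

/-- The coefficientwise action of the derivations of the frame on power series. -/
abbrev sd (m : Fin 3) : PowerSeries Tern →+ PowerSeries Tern :=
  seriesMap (coeffwise (σ := Fin 3) (F.D m) : Tern →+ Tern)

theorem pd_mul (m : Fin 3) (P Q : PowerSeries Tern) : pd m (P * Q) = P * pd m Q + Q * pd m P :=
  seriesMap_mul _ (fun a b => (pderiv m).leibniz a b) P Q

theorem sd_mul (m : Fin 3) (P Q : PowerSeries Tern) :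
    F.sd m (P * Q) = P * F.sd m Q + Q * F.sd m P :=
  seriesMap_mul _ (fun a b => (coeffwise (F.D m)).leibniz a b) P Q

theorem pd_jet_X (m : Fin 3) (i : Fin 5) :
    pd m (F.jet y (X i)) = PowerSeries.X * F.sd m (F.jet y (X i)) := by
  rw [jet_X]
  refine Fin.cases ?_ (fun i => Fin.cases ?_ (fun j => ?_) i) i
  · ext1 n
    rw [coeff_seriesMap]
    cases n with
    | zero => simp [jetCoord, taylor]
    | succ n =>
      rw [PowerSeries.coeff_succ_X_mul, coeff_seriesMap]
      simp [jetCoord, pderiv_taylor_succ]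
  · have h1 : pd m 1 = 0 := by
      rw [← map_one PowerSeries.C, seriesMap_C]; simp
    have h2 : F.sd m 1 = 0 := by
      rw [← map_one PowerSeries.C, seriesMap_C]; simp
    simp only [jetCoord, Fin.cons_succ, Fin.cons_zero, h1, h2, mul_zero]
  · simp only [jetCoord, Fin.cons_succ, map_add, pd_mul, sd_mul, seriesMap_C]
    rw [seriesMap_X _ (by simp), seriesMap_X _ (by simp)]
    by_cases h : m = j
    · subst h; simp [coeffwise_C, coeffwise_X, F.D_p]
    · simp [coeffwise_C, coeffwise_X, F.D_p, h, pderiv_X_of_ne (Ne.symm h)]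

theorem pd_jet (m : Fin 3) (P : MvPolynomial (Fin 5) ℂ) :
    pd m (F.jet y P) =
      PowerSeries.X * (F.sd m (F.jet y P) - F.jet y (coeffwise (F.D m) P)) := by
  induction P using MvPolynomial.induction_on with
  | C a =>
    rw [coeffwise_C, jet_C, jet_C, seriesMap_C, seriesMap_C]
    simp [coeffwise_C]
  | add P Q hP hQ => simp only [map_add, hP, hQ]; ring
  | mul_X P i hP =>
    rw [map_mul (F.jet y), pd_mul, pd_jet_X, hP, Derivation.leibniz, coeffwise_X, smul_zero,
      zero_add,
      smul_eq_mul, sd_mul, map_mul]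
    ring

theorem pderiv_coeff_jet (m : Fin 3) (k : ℕ) (P : MvPolynomial (Fin 5) ℂ) :
    pderiv m (PowerSeries.coeff (k + 1) (F.jet y P)) =
      coeffwise (F.D m) (PowerSeries.coeff k (F.jet y P)) -
        PowerSeries.coeff k (F.jet y (coeffwise (F.D m) P)) := by
  have h := congrArg (PowerSeries.coeff (k + 1)) (F.pd_jet y m P)
  rw [coeff_seriesMap, PowerSeries.coeff_succ_X_mul, map_sub, coeff_seriesMap] at h
  exact h

theorem isHomogeneous_coeff_jet (P : MvPolynomial (Fin 5) ℂ) (k : ℕ) :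
    (PowerSeries.coeff k (F.jet y P)).IsHomogeneous k := by
  have hX : ∀ i k, (PowerSeries.coeff k (F.jet y (X i))).IsHomogeneous k := by
    intro i k
    rw [jet_X]
    refine Fin.cases ?_ (fun i => Fin.cases ?_ (fun j => ?_) i) i
    · simpa [jetCoord] using F.isHomogeneous_taylor y k
    · simp only [jetCoord, Fin.cons_succ, Fin.cons_zero, PowerSeries.coeff_one]
      split_ifs with h
      · subst h; exact isHomogeneous_one _ _
      · exact isHomogeneous_zero _ _ _
    · simp only [jetCoord, Fin.cons_succ, map_add]
      refine IsHomogeneous.add ?_ ?_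
      · rw [PowerSeries.coeff_C]
        split_ifs with h
        · subst h; exact isHomogeneous_C _ _
        · exact isHomogeneous_zero _ _ _
      · rw [PowerSeries.coeff_mul_C, PowerSeries.coeff_X]
        split_ifs with h
        · subst h; simpa using isHomogeneous_X ℂ j
        · simpa using isHomogeneous_zero _ _ _
  induction P using MvPolynomial.induction_on generalizing k with
  | C a =>
    rw [jet_C, PowerSeries.coeff_C]
    split_ifs with h
    · subst h; exact isHomogeneous_C _ _
    · exact isHomogeneous_zero _ _ _
  | add P Q hP hQ => rw [map_add, map_add]; exact (hP k).add (hQ k)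
  | mul_X P i hP =>
    rw [map_mul, PowerSeries.coeff_mul]
    refine IsHomogeneous.sum _ _ _ fun x hx => ?_
    rw [← Finset.HasAntidiagonal.mem_antidiagonal.1 hx]
    exact (hP _).mul (hX i _)

theorem coeff_zero_jet (P : MvPolynomial (Fin 5) ℂ) :
    PowerSeries.coeff 0 (F.jet y P) = C (eval (F.pt y) P) := by
  induction P using MvPolynomial.induction_on with
  | C a => rw [jet_C, PowerSeries.coeff_zero_C, eval_C]
  | add P Q hP hQ => simp only [map_add, hP, hQ]
  | mul_X P i hP =>
    rw [PowerSeries.coeff_zero_eq_constantCoeff_apply] at hP ⊢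
    rw [map_mul, map_mul, hP, map_mul, C_mul, eval_X, jet_X]
    congr 1
    refine Fin.cases ?_ (fun i => Fin.cases ?_ (fun j => ?_) i) i
    · simp [jetCoord, pt, taylor, ← PowerSeries.coeff_zero_eq_constantCoeff_apply]
    · simp [jetCoord, pt]
    · simp [jetCoord, pt]

/-- The polynomials whose coefficients are constants for the derivations. -/
def IsConst {σ : Type} (P : MvPolynomial σ ℂ) : Prop := ∀ i m, F.D i (coeff m P) = 0

theorem jet_eq_zero {P : MvPolynomial (Fin 5) ℂ} (hP : F.IsConst P) (h0 : eval (F.pt y) P = 0) :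
    F.jet y P = 0 := by
  ext1 k
  rw [map_zero]
  induction k with
  | zero => rw [coeff_zero_jet, h0, C_0]
  | succ k ih =>
    refine eq_zero_of_isHomogeneous_of_pderiv (F.isHomogeneous_coeff_jet y P (k + 1)) fun m => ?_
    rw [pderiv_coeff_jet, ih, coeffwise_eq_zero _ (hP m)]
    simp

end Frame

theorem exists_C_mem_span_pair {A : Type} [CommRing A] [IsDomain A] [IsGCDMonoid A]
    {f g : Polynomial A} (hf : Irreducible f) (hdeg : f.natDegree ≠ 0) (hfg : ¬ f ∣ g) :
    ∃ r : A, r ≠ 0 ∧ Polynomial.C r ∈ Ideal.span {f, g} := by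
  let K := FractionRing A
  have hprim := hf.isPrimitive hdeg
  have hirr : Irreducible (f.map (algebraMap A K)) :=
    hprim.irreducible_iff_irreducible_map_fraction_map.1 hf
  have hnd : ¬ f.map (algebraMap A K) ∣ g.map (algebraMap A K) := fun h =>
    hfg (hprim.dvd_of_fraction_map_dvd_fraction_map h)
  obtain ⟨a, b, hab⟩ := (hirr.coprime_iff_not_dvd.2 hnd)
  obtain ⟨r, hr, ha⟩ := IsLocalization.integerNormalization_spec (nonZeroDivisors A) a
  obtain ⟨s, hs, hb⟩ := IsLocalization.integerNormalization_spec (nonZeroDivisors A) b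
  refine ⟨r * s, mul_ne_zero (nonZeroDivisors.ne_zero hr) (nonZeroDivisors.ne_zero hs), ?_⟩
  rw [Ideal.mem_span_pair]
  refine ⟨Polynomial.C s * IsLocalization.integerNormalization (nonZeroDivisors A) a,
    Polynomial.C r * IsLocalization.integerNormalization (nonZeroDivisors A) b, ?_⟩
  apply Polynomial.map_injective _ (IsFractionRing.injective A K)
  simp only [Polynomial.map_add, Polynomial.map_mul, Polynomial.map_C, ha, hb,
    Algebra.smul_def, Polynomial.algebraMap_apply, map_mul]
  linear_combination (Polynomial.C (algebraMap A K r) * Polynomial.C (algebraMap A K s)) * hab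

theorem eval_smul_of_isHomogeneous {σ : Type} {P : MvPolynomial σ ℂ} {n : ℕ}
    (h : P.IsHomogeneous n) (c : ℂ) (v : σ → ℂ) : eval (c • v) P = c ^ n * eval v P := by
  rw [eval_eq, eval_eq, Finset.mul_sum]
  refine Finset.sum_congr rfl fun m hm => ?_
  have hd := h (mem_support_iff.1 hm)
  simp only [Pi.smul_apply, smul_eq_mul, mul_pow, Finset.prod_mul_distrib]
  rw [Finset.prod_pow_eq_pow_sum]
  have : ∑ i ∈ m.support, m i = n := by
    rw [← hd, Finsupp.weight_apply, Finsupp.sum]; simp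
  rw [this]; ring

theorem eq_zero_of_isHomogeneous_of_eval_cons_one {k : ℕ} {P : MvPolynomial (Fin (k + 1)) ℂ} {n : ℕ}
    (h : P.IsHomogeneous n) (h0 : ∀ x : Fin k → ℂ, eval (Fin.cons 1 x : Fin (k + 1) → ℂ) P = 0) :
    P = 0 := by
  have h1 : X 0 * P = 0 := by
    refine MvPolynomial.funext fun v => ?_
    rw [map_mul, eval_X, map_zero]
    by_cases hv : v 0 = 0
    · rw [hv, zero_mul]
    · have hv' : v = v 0 • (Fin.cons 1 fun i : Fin k => (v 0)⁻¹ * v i.succ : Fin (k + 1) → ℂ) := by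
        ext i
        refine Fin.cases ?_ (fun i => ?_) i
        · simp
        · simp [mul_inv_cancel_left₀ hv]
      rw [hv', eval_smul_of_isHomogeneous h, h0, mul_zero, mul_zero]
  exact (mul_eq_zero.1 h1).resolve_left (X_ne_zero 0)

namespace Frame

variable (F : Frame) (y : ℂ)

theorem eq_zero_of_jet_rename_succ {P : MvPolynomial (Fin 4) ℂ} {n : ℕ} (h : P.IsHomogeneous n)
    (h0 : F.jet y (rename Fin.succ P) = 0) : P = 0 := by
  refine eq_zero_of_isHomogeneous_of_eval_cons_one h fun x => ?_
  let c : Fin 4 → Polynomial Tern := Fin.cons 1 fun j =>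
    Polynomial.C (C (F.p j)) + Polynomial.X * Polynomial.C (X j)
  have h1 : ∀ Q : MvPolynomial (Fin 4) ℂ,
      ((aeval c Q : Polynomial Tern) : PowerSeries Tern) = F.jet y (rename Fin.succ Q) := by
    intro Q
    rw [jet, aeval_rename]
    induction Q using MvPolynomial.induction_on with
    | C a =>
      rw [aeval_C, aeval_C, IsScalarTower.algebraMap_apply ℂ Tern (PowerSeries Tern),
        IsScalarTower.algebraMap_apply ℂ Tern (Polynomial Tern)]
      simp
    | add P Q hP hQ => simp only [map_add, Polynomial.coe_add, hP, hQ]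
    | mul_X P i hP =>
      rw [map_mul, map_mul, Polynomial.coe_mul, hP, aeval_X, aeval_X]
      congr 1
      refine Fin.cases ?_ (fun j => ?_) i <;> simp [c, jetCoord, mul_comm PowerSeries.X]
  have h2 : aeval c P = 0 := by
    have := h1 P
    rw [h0] at this
    exact_mod_cast this
  have h3 : ∀ Q : MvPolynomial (Fin 4) ℂ,
      eval (fun j => x j - F.p j) (Polynomial.eval 1 (aeval c Q)) = eval (Fin.cons 1 x) Q := by
    intro Q
    induction Q using MvPolynomial.induction_on with
    | C a =>
      rw [aeval_C, IsScalarTower.algebraMap_apply ℂ Tern (Polynomial Tern)]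
      simp
    | add P Q hP hQ => simp only [map_add, Polynomial.eval_add, hP, hQ]
    | mul_X P i hP =>
      rw [map_mul, Polynomial.eval_mul, map_mul, hP, aeval_X, map_mul, eval_X]
      congr 1
      refine Fin.cases ?_ (fun j => ?_) i <;> simp [c]
  rw [← h3, h2]; simp

theorem dvd_of_jet_eq_zero {f P : MvPolynomial (Fin 5) ℂ} {n k : ℕ} (hf : f.IsHomogeneous n)
    (hirr : Irreducible f) (hdeg : (finSuccEquiv ℂ 4 f).natDegree ≠ 0) (hP : P.IsHomogeneous k)
    (hf0 : F.jet y f = 0) (hP0 : F.jet y P = 0) : f ∣ P := by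
  by_contra hnd
  obtain ⟨r, hr, hmem⟩ := exists_C_mem_span_pair (f := finSuccEquiv ℂ 4 f)
    (g := finSuccEquiv ℂ 4 P) ((MulEquiv.irreducible_iff (finSuccEquiv ℂ 4)).2 hirr) hdeg
    (fun h => hnd ((map_dvd_iff (finSuccEquiv ℂ 4)).1 h))
  have hmem' : rename Fin.succ r ∈ Ideal.span {f, P} := by
    rw [Ideal.mem_span_pair] at hmem ⊢
    obtain ⟨a, b, hab⟩ := hmem
    refine ⟨(finSuccEquiv ℂ 4).symm a, (finSuccEquiv ℂ 4).symm b, ?_⟩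
    apply (finSuccEquiv ℂ 4).injective
    have : ∀ r : MvPolynomial (Fin 4) ℂ, finSuccEquiv ℂ 4 (rename Fin.succ r) = Polynomial.C r := by
      intro r
      induction r using MvPolynomial.induction_on with
      | C a => simp [finSuccEquiv_apply]
      | add P Q hP hQ => simp only [map_add, hP, hQ]
      | mul_X P i hP => simp only [map_mul, hP, rename_X, finSuccEquiv_X_succ]
    simp [hab, this]
  let _ := gradedAlgebra (σ := Fin 5) (R := ℂ)
  have hhom : (Ideal.span {f, P}).IsHomogeneous (homogeneousSubmodule (Fin 5) ℂ) := by
    refine Ideal.homogeneous_span _ _ ?_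
    rintro x (rfl | rfl)
    · exact ⟨n, hf⟩
    · exact ⟨k, hP⟩
  have hz : ∀ Q ∈ Ideal.span {f, P}, F.jet y Q = 0 := by
    intro Q hQ
    obtain ⟨a, b, rfl⟩ := Ideal.mem_span_pair.1 hQ
    simp [hf0, hP0]
  refine hr ?_
  rw [← sum_homogeneousComponent r]
  refine Finset.sum_eq_zero fun e _ => ?_
  refine F.eq_zero_of_jet_rename_succ y (homogeneousComponent_isHomogeneous e r) (hz _ ?_)
  rw [rename_homogeneousComponent]
  exact homogeneousComponent_mem_of_mem hhom hmem' e

end Frame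

theorem exists_aeval_eq_add {σ S : Type} [CommRing S] [Algebra ℂ S] {c c' : σ → S} {i : σ}
    (h : ∀ j, j ≠ i → c' j = c j) (P : MvPolynomial σ ℂ) :
    ∃ k, aeval c' P = aeval c P + aeval c (pderiv i P) * (c' i - c i) + k * (c' i - c i) ^ 2 := by
  induction P using MvPolynomial.induction_on with
  | C a => exact ⟨0, by simp⟩
  | add P Q hP hQ =>
    obtain ⟨k, hk⟩ := hP
    obtain ⟨l, hl⟩ := hQ
    refine ⟨k + l, ?_⟩
    simp only [map_add, hk, hl]; ring
  | mul_X P j hP =>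
    obtain ⟨k, hk⟩ := hP
    by_cases hj : j = i
    · subst hj
      refine ⟨aeval c (pderiv j P) + k * c' j, ?_⟩
      simp only [map_mul, hk, pderiv_mul, pderiv_X_self, map_add, aeval_X, mul_one]
      ring
    · refine ⟨k * c j, ?_⟩
      simp only [map_mul, hk, pderiv_mul, pderiv_X_of_ne hj, aeval_X, h j hj, mul_zero,
        add_zero]
      ring

/-- A direction of a line through the base point. -/
def dir (w : ℂ) (u : Fin 3 → ℂ) : Fin 5 → ℂ := Fin.cons w (Fin.cons 0 u)

namespace Frame

variable (F : Frame) (y : ℂ)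

/-- The direction `u` lifts to a line through the base point on which `f` vanishes. -/
def IsLineDir (f : MvPolynomial (Fin 5) ℂ) (u : Fin 3 → ℂ) : Prop :=
  ∃ w, ∀ t : ℂ, eval (F.pt y + t • dir w u) f = 0

/-- The parametrisation of a line through the base point. -/
def lineCoord (w : ℂ) (u : Fin 3 → ℂ) : Fin 5 → Polynomial ℂ := fun i =>
  Polynomial.C (F.pt y i) + Polynomial.X * Polynomial.C (dir w u i)

theorem eval_aeval_lineCoord (w : ℂ) (u : Fin 3 → ℂ) (t : ℂ) (P : MvPolynomial (Fin 5) ℂ) :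
    (aeval (F.lineCoord y w u) P).eval t = eval (F.pt y + t • dir w u) P := by
  induction P using MvPolynomial.induction_on with
  | C a => simp
  | add P Q hP hQ => simp only [map_add, Polynomial.eval_add, hP, hQ]
  | mul_X P i hP => simp [hP, lineCoord, mul_comm t]

theorem aeval_lineCoord_eq_zero_iff {w : ℂ} {u : Fin 3 → ℂ} {P : MvPolynomial (Fin 5) ℂ} :
    aeval (F.lineCoord y w u) P = 0 ↔ ∀ t : ℂ, eval (F.pt y + t • dir w u) P = 0 := by
  simp only [← eval_aeval_lineCoord]
  exact ⟨fun h t => by rw [h]; simp, fun h => Polynomial.funext fun t => by rw [h]; simp⟩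

theorem natDegree_aeval_lineCoord {w : ℂ} {u : Fin 3 → ℂ} {P : MvPolynomial (Fin 5) ℂ} {n : ℕ}
    (hP : P.IsHomogeneous n) : (aeval (F.lineCoord y w u) P).natDegree ≤ n := by
  refine (MvPolynomial.aeval_natDegree_le P (hP.totalDegree_le) _ (n := 1) fun i => ?_).trans
    (by simp)
  refine (Polynomial.natDegree_add_le _ _).trans (max_le (by simp) ?_)
  exact (Polynomial.natDegree_mul_le).trans (by simp)

/-- The expansion of a polynomial along the formal graph in a fixed direction. -/
def jetAt (u : Fin 3 → ℂ) (P : MvPolynomial (Fin 5) ℂ) : PowerSeries ℂ :=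
  PowerSeries.map (eval u) (F.jet y P)

theorem coeff_jetAt (u : Fin 3 → ℂ) (P : MvPolynomial (Fin 5) ℂ) (k : ℕ) :
    PowerSeries.coeff k (F.jetAt y u P) = eval u (PowerSeries.coeff k (F.jet y P)) :=
  PowerSeries.coeff_map _ _ _

/-- The coordinates of the formal graph in a fixed direction. -/
def jetAtCoord (u : Fin 3 → ℂ) (i : Fin 5) : PowerSeries ℂ := F.jetAt y u (X i)

theorem jetAt_eq_aeval (u : Fin 3 → ℂ) (P : MvPolynomial (Fin 5) ℂ) :
    F.jetAt y u P = aeval (F.jetAtCoord y u) P := by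
  induction P using MvPolynomial.induction_on with
  | C a =>
    rw [jetAt, jet_C, aeval_C, PowerSeries.map_C]
    simp
  | add P Q hP hQ =>
    rw [map_add, ← hP, ← hQ, jetAt, map_add, map_add]; rfl
  | mul_X P i hP =>
    rw [map_mul, ← hP, jetAt, map_mul, map_mul, aeval_X]; rfl

theorem aeval_coe_lineCoord (w : ℂ) (u : Fin 3 → ℂ) (P : MvPolynomial (Fin 5) ℂ) :
    aeval (fun i => (F.lineCoord y w u i : PowerSeries ℂ)) P =
      ((aeval (F.lineCoord y w u) P : Polynomial ℂ) : PowerSeries ℂ) := by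
  induction P using MvPolynomial.induction_on with
  | C a => rw [aeval_C, aeval_C]; simp
  | add P Q hP hQ => rw [map_add, map_add, Polynomial.coe_add, hP, hQ]
  | mul_X P i hP => rw [map_mul, map_mul, Polynomial.coe_mul, hP, aeval_X, aeval_X]

theorem lineCoord_eq_jetAtCoord (w : ℂ) (u : Fin 3 → ℂ) (j : Fin 5) (hj : j ≠ 0) :
    (F.lineCoord y w u j : PowerSeries ℂ) = F.jetAtCoord y u j := by
  rw [jetAtCoord, jetAt, jet_X]
  revert hj
  refine Fin.cases (fun h => absurd rfl h) (fun j _ => ?_) j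
  refine Fin.cases ?_ (fun j => ?_) j
  · simp [lineCoord, pt, dir, jetCoord]
  · simp [lineCoord, pt, dir, jetCoord, mul_comm PowerSeries.X]

theorem coeff_jetAtCoord_zero (u : Fin 3 → ℂ) (k : ℕ) :
    PowerSeries.coeff k (F.jetAtCoord y u 0) = eval u (F.taylor y k) := by
  rw [jetAtCoord, coeff_jetAt, jet_X]
  simp [jetCoord]

theorem coeff_lineCoord_zero (w : ℂ) (u : Fin 3 → ℂ) (k : ℕ) :
    PowerSeries.coeff k (F.lineCoord y w u 0 : PowerSeries ℂ) =
      if k = 0 then y else if k = 1 then w else 0 := by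
  rw [Polynomial.coeff_coe]
  simp only [lineCoord, pt, dir, Fin.cons_zero, Polynomial.coeff_add, Polynomial.coeff_C,
    Polynomial.coeff_mul_C, Polynomial.coeff_X]
  rcases k with _ | _ | k <;> simp

section

variable {f : MvPolynomial (Fin 5) ℂ} (hf : F.jet y f = 0)
include hf

theorem isLineDir_of_taylor {u : Fin 3 → ℂ} (h : ∀ k, 2 ≤ k → eval u (F.taylor y k) = 0) :
    F.IsLineDir y f u := by
  refine ⟨eval u (F.taylor y 1), ?_⟩
  rw [← aeval_lineCoord_eq_zero_iff]
  have h1 : (fun i => (F.lineCoord y (eval u (F.taylor y 1)) u i : PowerSeries ℂ)) =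
      F.jetAtCoord y u := by
    funext i
    by_cases hi : i = 0
    · subst hi
      ext k
      rw [coeff_jetAtCoord_zero, coeff_lineCoord_zero]
      rcases k with _ | _ | k
      · simp [taylor]
      · simp
      · simp [h (k + 1 + 1) (by omega)]
    · exact F.lineCoord_eq_jetAtCoord y _ u i hi
  have h2 := F.aeval_coe_lineCoord y (eval u (F.taylor y 1)) u f
  rw [h1, ← jetAt_eq_aeval, jetAt, hf, map_zero] at h2
  exact_mod_cast h2.symm

theorem isLineDir_of_taylor_two {n : ℕ} (hn : n ≤ 2) (hhom : f.IsHomogeneous n) {u : Fin 3 → ℂ}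
    (h : eval u (F.taylor y 2) = 0) : F.IsLineDir y f u := by
  refine ⟨eval u (F.taylor y 1), ?_⟩
  rw [← aeval_lineCoord_eq_zero_iff]
  set w := eval u (F.taylor y 1)
  obtain ⟨k, hk⟩ := exists_aeval_eq_add
    (c' := fun i => (F.lineCoord y w u i : PowerSeries ℂ)) (F.lineCoord_eq_jetAtCoord y w u) f
  rw [← jetAt_eq_aeval, jetAt, hf, map_zero, zero_add, aeval_coe_lineCoord] at hk
  have hd : (PowerSeries.X : PowerSeries ℂ) ^ 3 ∣
      (F.lineCoord y w u 0 : PowerSeries ℂ) - F.jetAtCoord y u 0 := by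
    rw [PowerSeries.X_pow_dvd_iff]
    intro m hm
    rw [map_sub, coeff_jetAtCoord_zero, coeff_lineCoord_zero]
    interval_cases m
    · simp [taylor]
    · simp [w]
    · simp [h]
  have hd2 : (PowerSeries.X : PowerSeries ℂ) ^ 3 ∣
      ((aeval (F.lineCoord y w u) f : Polynomial ℂ) : PowerSeries ℂ) := by
    rw [hk, pow_two]
    exact dvd_add (hd.mul_left _) ((hd.mul_right _).mul_left _)
  rw [PowerSeries.X_pow_dvd_iff] at hd2
  ext m
  by_cases hm : m < 3
  · simpa using hd2 m hm
  · exact Polynomial.coeff_eq_zero_of_natDegree_lt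
      (lt_of_le_of_lt (F.natDegree_aeval_lineCoord y hhom) (by omega))

variable (h0 : eval (F.pt y) (pderiv 0 f) ≠ 0)
include h0

theorem lineCoord_eq_of_line {w : ℂ} {u : Fin 3 → ℂ}
    (h : ∀ t : ℂ, eval (F.pt y + t • dir w u) f = 0) :
    (F.lineCoord y w u 0 : PowerSeries ℂ) = F.jetAtCoord y u 0 := by
  rw [← aeval_lineCoord_eq_zero_iff] at h
  obtain ⟨k, hk⟩ := exists_aeval_eq_add
    (c' := fun i => (F.lineCoord y w u i : PowerSeries ℂ)) (F.lineCoord_eq_jetAtCoord y w u) f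
  rw [← jetAt_eq_aeval, jetAt, hf, map_zero, zero_add, aeval_coe_lineCoord, h, Polynomial.coe_zero,
    ← jetAt_eq_aeval] at hk
  set δ := (F.lineCoord y w u 0 : PowerSeries ℂ) - F.jetAtCoord y u 0 with hδ
  have h1 : (F.jetAt y u (pderiv 0 f) + k * δ) * δ = 0 := by linear_combination -hk
  have h2 : F.jetAt y u (pderiv 0 f) + k * δ ≠ 0 := by
    intro hz
    have h3 := congrArg (PowerSeries.coeff 0) hz
    have h4 : PowerSeries.constantCoeff δ = 0 := by
      rw [← PowerSeries.coeff_zero_eq_constantCoeff_apply, hδ, map_sub, coeff_jetAtCoord_zero,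
        coeff_lineCoord_zero]
      simp [taylor]
    rw [map_add, coeff_jetAt, coeff_zero_jet, eval_C,
      PowerSeries.coeff_zero_eq_constantCoeff_apply (k * δ), map_mul, h4, mul_zero, add_zero,
      map_zero] at h3
    exact h0 h3
  exact sub_eq_zero.1 ((mul_eq_zero.1 h1).resolve_left h2)

theorem eq_taylor_one_of_line {w : ℂ} {u : Fin 3 → ℂ}
    (h : ∀ t : ℂ, eval (F.pt y + t • dir w u) f = 0) : w = eval u (F.taylor y 1) := by
  rw [← coeff_jetAtCoord_zero, ← F.lineCoord_eq_of_line y hf h0 h, coeff_lineCoord_zero]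
  simp

theorem IsLineDir.taylor_eq_zero {u : Fin 3 → ℂ} (h : F.IsLineDir y f u) {k : ℕ} (hk : 2 ≤ k) :
    eval u (F.taylor y k) = 0 := by
  obtain ⟨w, hw⟩ := h
  rw [← coeff_jetAtCoord_zero, ← F.lineCoord_eq_of_line y hf h0 hw, coeff_lineCoord_zero,
    if_neg (by omega), if_neg (by omega)]

theorem IsLineDir.coeff_jet_eq_zero {u : Fin 3 → ℂ} (h : F.IsLineDir y f u)
    {P : MvPolynomial (Fin 5) ℂ} {n k : ℕ} (hP : P.IsHomogeneous n) (hk : n < k) :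
    eval u (PowerSeries.coeff k (F.jet y P)) = 0 := by
  obtain ⟨w, hw⟩ := h
  have h1 : (fun i => (F.lineCoord y w u i : PowerSeries ℂ)) = F.jetAtCoord y u := by
    funext i
    by_cases hi : i = 0
    · subst hi; exact F.lineCoord_eq_of_line y hf h0 hw
    · exact F.lineCoord_eq_jetAtCoord y _ u i hi
  rw [← coeff_jetAt, jetAt_eq_aeval, ← h1, aeval_coe_lineCoord, Polynomial.coeff_coe]
  exact Polynomial.coeff_eq_zero_of_natDegree_lt
    (lt_of_le_of_lt (F.natDegree_aeval_lineCoord y hP) hk)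

end

end Frame

theorem homogeneousComponent_mul_left {σ : Type} {h : MvPolynomial σ ℂ} {e : ℕ}
    (hh : h.IsHomogeneous e) (τ : MvPolynomial σ ℂ) (k : ℕ) :
    homogeneousComponent (e + k) (h * τ) = h * homogeneousComponent k τ := by
  conv_lhs => rw [← sum_homogeneousComponent τ]
  rw [Finset.mul_sum, map_sum]
  have h1 : ∀ i, homogeneousComponent (e + k) (h * homogeneousComponent i τ) =
      if k = i then h * homogeneousComponent k τ else 0 := fun i => by
    rw [homogeneousComponent_of_mem ((mem_homogeneousSubmodule _ _).2
      (hh.mul (homogeneousComponent_isHomogeneous i τ)))]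
    by_cases hki : k = i
    · subst hki; simp
    · rw [if_neg (by omega), if_neg hki]
  simp only [h1, Finset.sum_ite_eq, Finset.mem_range]
  split_ifs with hk
  · rfl
  · rw [homogeneousComponent_eq_zero k τ (by omega), mul_zero]

theorem exists_homogeneous_eq_mul {σ : Type} {h P : MvPolynomial σ ℂ} {e k : ℕ}
    (hh : h.IsHomogeneous e) (hP : P.IsHomogeneous (e + k)) (hd : h ∣ P) :
    ∃ τ : MvPolynomial σ ℂ, τ.IsHomogeneous k ∧ P = h * τ := by
  obtain ⟨τ, rfl⟩ := hd
  refine ⟨homogeneousComponent k τ, homogeneousComponent_isHomogeneous k τ, ?_⟩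
  rw [← homogeneousComponent_mul_left hh, homogeneousComponent_eq_self hP]

theorem le_of_dvd_of_isHomogeneous {σ : Type} {h P : MvPolynomial σ ℂ} {e k : ℕ}
    (hh : h.IsHomogeneous e) (hP : P.IsHomogeneous k) (hP0 : P ≠ 0) (hd : h ∣ P) : e ≤ k := by
  obtain ⟨τ, rfl⟩ := hd
  have h1 := totalDegree_mul_of_isDomain (left_ne_zero_of_mul hP0) (right_ne_zero_of_mul hP0)
  rw [hP.totalDegree hP0, hh.totalDegree (left_ne_zero_of_mul hP0)] at h1
  omega

theorem dvd_of_dvd_pderiv {g P : Tern} {m : ℕ} (hP : P.IsHomogeneous (m + 1))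
    (h : ∀ i, g ∣ pderiv i P) : g ∣ P := by
  have h1 : g ∣ (m + 1) • P := by
    rw [← hP.sum_X_mul_pderiv]
    exact Finset.dvd_sum fun i _ => (h i).mul_left _
  have h2 : P = C ((m + 1 : ℕ) : ℂ)⁻¹ * ((m + 1) • P) := by
    rw [nsmul_eq_mul, ← mul_assoc, ← map_natCast C, ← C_mul,
      inv_mul_cancel₀ (Nat.cast_ne_zero.2 m.succ_ne_zero), C_1, one_mul]
  rw [h2]
  exact h1.mul_left _

theorem dvd_aeval_sub_aeval {h : Tern} {c c' : Fin 3 → Tern} (hc : ∀ i, h ∣ c i - c' i)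
    (P : Tern) : h ∣ aeval c P - aeval c' P := by
  induction P using MvPolynomial.induction_on with
  | C a => simp
  | add P Q hP hQ =>
    rw [map_add, map_add, add_sub_add_comm]
    exact dvd_add hP hQ
  | mul_X P i hP =>
    rw [map_mul, map_mul, aeval_X, aeval_X]
    have : aeval c P * c i - aeval c' P * c' i =
        (aeval c P - aeval c' P) * c i + aeval c' P * (c i - c' i) := by ring
    rw [this]
    exact dvd_add (hP.mul_right _) ((hc i).mul_left _)

theorem eval_aeval (c : Fin 3 → Tern) (x : Fin 3 → ℂ) (P : Tern) :
    eval x (aeval c P) = eval (fun i => eval x (c i)) P := by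
  induction P using MvPolynomial.induction_on with
  | C a => simp
  | add P Q hP hQ => rw [map_add, map_add, map_add, hP, hQ]
  | mul_X P i hP => rw [map_mul, map_mul, map_mul, hP, aeval_X, eval_X]

theorem aeval_mul_X_of_isHomogeneous {P : Tern} {m : ℕ} (hP : P.IsHomogeneous m) (L : Tern) :
    aeval (fun i => L * X i) P = L ^ m * P := by
  refine MvPolynomial.funext fun x => ?_
  rw [eval_aeval, map_mul, map_pow, ← eval_smul_of_isHomogeneous hP]
  congr 2
  funext i
  simp

/-- The linear form attached to a linear functional. -/
def linForm (φ : (Fin 3 → ℂ) →ₗ[ℂ] ℂ) : Tern := ∑ i, C (φ (Pi.single i 1)) * X i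

theorem eval_linForm (φ : (Fin 3 → ℂ) →ₗ[ℂ] ℂ) (x : Fin 3 → ℂ) : eval x (linForm φ) = φ x := by
  conv_rhs => rw [pi_eq_sum_univ' x, map_sum]
  simp only [linForm, map_sum, map_mul, eval_C, eval_X, map_smul, smul_eq_mul, mul_comm]

theorem isHomogeneous_linForm (φ : (Fin 3 → ℂ) →ₗ[ℂ] ℂ) : (linForm φ).IsHomogeneous 1 := by
  refine IsHomogeneous.sum _ _ _ fun i _ => ?_
  exact isHomogeneous_C_mul_X _ _

theorem eq_C_of_isHomogeneous_zero {P : Tern} (hP : P.IsHomogeneous 0) : ∃ a, P = C a :=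
  ⟨_, totalDegree_eq_zero_iff_eq_C.1 (Nat.le_zero.1 hP.totalDegree_le)⟩

theorem exists_eq_linForm {P : Tern} (hP : P.IsHomogeneous 1) : ∃ φ, P = linForm φ := by
  choose a ha using fun i => eq_C_of_isHomogeneous_zero (hP.pderiv (i := i))
  refine ⟨∑ i, a i • LinearMap.proj i, MvPolynomial.funext fun x => ?_⟩
  have h1 := hP.sum_X_mul_pderiv
  rw [one_smul] at h1
  rw [eval_linForm, ← h1]
  simp [ha, Fin.sum_univ_three, mul_comm]

theorem isUnit_of_isHomogeneous {P : Tern} {m : ℕ} (hP : P.IsHomogeneous m) (hu : IsUnit P) :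
    m = 0 := by
  have h1 := (isUnit_iff_totalDegree_of_isReduced.1 hu).2
  rwa [hP.totalDegree hu.ne_zero] at h1

theorem prime_of_isHomogeneous_one {P : Tern} (hP : P.IsHomogeneous 1) (h0 : P ≠ 0) :
    Prime P := by
  refine Irreducible.prime (irreducible_of_totalDegree_eq_one (hP.totalDegree h0) fun x hx => ?_)
  rw [isUnit_iff_ne_zero]
  rintro rfl
  exact h0 (MvPolynomial.ext _ _ fun m => by simpa using hx m)

/-- The first polynomial vanishes on a plane containing the zeros of the second. -/
theorem linForm_dvd {φ : (Fin 3 → ℂ) →ₗ[ℂ] ℂ} (hφ : φ ≠ 0) {P : Tern}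
    (hP : ∀ x, φ x = 0 → eval x P = 0) : linForm φ ∣ P := by
  obtain ⟨w, hw⟩ : ∃ w, φ w = 1 := LinearMap.surjective hφ 1
  have h1 := dvd_aeval_sub_aeval (h := linForm φ) (c := X)
    (c' := fun i => X i - linForm φ * C (w i)) (fun i => by simp) P
  have h2 : aeval (fun i => X i - linForm φ * C (w i)) P = (0 : Tern) := by
    refine MvPolynomial.funext fun x => ?_
    rw [eval_aeval, map_zero]
    refine hP _ ?_
    have : (fun i => eval x (X i - linForm φ * C (w i))) = x - φ x • w := by
      funext i; simp [eval_linForm]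
    rw [this]
    simp [hw]
  rw [h2, sub_zero, aeval_X_left_apply] at h1
  exact h1

/-- The polar bilinear form of a ternary quadratic form. -/
theorem exists_bilin {q : Tern} (hq : q.IsHomogeneous 2) :
    ∃ B : LinearMap.BilinForm ℂ (Fin 3 → ℂ),
      (∀ x y, B x y = B y x) ∧ (∀ x, eval x q = B x x) ∧
        ∀ x y, B x y = 2⁻¹ * ∑ i, x i * eval y (pderiv i q) := by
  choose φ hφ using fun i => exists_eq_linForm (hq.pderiv (i := i))
  have hsymm : ∀ i j, φ i (Pi.single j 1) = φ j (Pi.single i 1) := by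
    have h1 : ∀ i j, pderiv j (linForm (φ i)) = C (φ i (Pi.single j 1)) := fun i j => by
      simp [linForm, pderiv_X, Pi.single_apply]
    intro i j
    have h2 : pderiv j (pderiv i q) = pderiv i (pderiv j q) := by
      have h3 : ⁅pderiv j, pderiv i⁆ = (0 : Derivation ℂ Tern Tern) :=
        derivation_ext fun k => by
          rw [Derivation.commutator_apply, pderiv_X, pderiv_X]
          simp only [Pi.single_apply]
          split_ifs <;> simp
      exact sub_eq_zero.1 (DFunLike.congr_fun h3 q)
    rw [hφ, hφ, h1, h1] at h2
    exact C_injective _ _ h2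
  have hexp : ∀ i x, φ i x = ∑ j, φ i (Pi.single j 1) * x j := fun i x => by
    rw [← eval_linForm]; simp [linForm]
  refine ⟨LinearMap.mk₂ ℂ (fun x y => 2⁻¹ * ∑ i, x i * φ i y) ?_ ?_ ?_ ?_, fun x y => ?_,
    fun x => ?_, fun x y => ?_⟩
  · intro x x' y; simp [Fin.sum_univ_three]; ring
  · intro c x y; simp [Fin.sum_univ_three]; ring
  · intro x y y'; simp [Fin.sum_univ_three]; ring
  · intro c x y; simp [Fin.sum_univ_three]; ring
  · rw [LinearMap.mk₂_apply, LinearMap.mk₂_apply]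
    simp only [Fin.sum_univ_three]
    rw [hexp 0 x, hexp 1 x, hexp 2 x, hexp 0 y, hexp 1 y, hexp 2 y]
    simp only [Fin.sum_univ_three]
    rw [hsymm 1 0, hsymm 2 0, hsymm 2 1]
    ring
  · have h1 := congrArg (eval x) hq.sum_X_mul_pderiv
    simp only [hφ, map_sum, map_mul, eval_X, eval_linForm] at h1
    rw [LinearMap.mk₂_apply, h1]
    simp
  · simp only [LinearMap.mk₂_apply, hφ, eval_linForm]

/-- A set of nonzero vectors representing pairwise distinct points of the projective plane. -/
def Spread (S : Set (Fin 3 → ℂ)) : Prop :=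
  (∀ u ∈ S, u ≠ 0) ∧ ∀ u ∈ S, ∀ v ∈ S, ∀ c : ℂ, u = c • v → u = v

theorem Spread.mono {S T : Set (Fin 3 → ℂ)} (hT : Spread T) (h : S ⊆ T) : Spread S :=
  ⟨fun u hu => hT.1 u (h hu), fun u hu v hv => hT.2 u (h hu) v (h hv)⟩

theorem ne_smul_symm {u z : Fin 3 → ℂ} (hu : u ≠ 0) (h : ∀ c : ℂ, z ≠ c • u) (c : ℂ) :
    u ≠ c • z := by
  intro hc
  have hc0 : c ≠ 0 := by
    rintro rfl
    exact hu (by simpa using hc)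
  exact h c⁻¹ (by rw [hc, smul_smul, inv_mul_cancel₀ hc0, one_smul])

theorem Spread.insert {S : Set (Fin 3 → ℂ)} (hS : Spread S) {z : Fin 3 → ℂ} (hz : z ≠ 0)
    (h : ∀ u ∈ S, ∀ c : ℂ, z ≠ c • u) : Spread (insert z S) := by
  refine ⟨?_, ?_⟩
  · rintro u (rfl | hu)
    exacts [hz, hS.1 u hu]
  · rintro u (rfl | hu) v (rfl | hv) c hc
    · rfl
    · exact absurd hc (h v hv c)
    · exact absurd hc (ne_smul_symm (hS.1 u hu) (h u hu) c)
    · exact hS.2 u hu v hv c hc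

theorem Spread.exists_avoiding {S : Set (Fin 3 → ℂ)} (hS : Spread S) (hinf : S.Infinite)
    {T : Set (Fin 3 → ℂ)} (hT : T.Finite) : ∃ z ∈ S, ∀ u ∈ T, ∀ c : ℂ, z ≠ c • u := by
  by_contra! h
  choose! g hg hg' using h
  obtain ⟨a, ha, b, hb, hab, hgab⟩ := hinf.exists_ne_map_eq_of_mapsTo hg hT
  obtain ⟨c, hc⟩ := hg' a ha
  obtain ⟨c', hc'⟩ := hg' b hb
  have hc0 : c' ≠ 0 := by
    rintro rfl
    exact hS.1 b hb (by simpa using hc')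
  refine hab (hS.2 a ha b hb (c * c'⁻¹) ?_)
  rw [hc', ← hgab, smul_smul, mul_assoc, inv_mul_cancel₀ hc0, mul_one]
  exact hc

theorem linearIndependent_pair_of_ne {a b : Fin 3 → ℂ} (hb : b ≠ 0) (h : ∀ c : ℂ, a ≠ c • b) :
    LinearIndependent ℂ ![b, a] :=
  (LinearIndependent.pair_iff' hb).2 fun c hc => h c hc.symm

theorem exists_basis_of_linearIndependent_pair {a b : Fin 3 → ℂ}
    (h : LinearIndependent ℂ ![a, b]) :
    ∃ B : Module.Basis (Fin 3) ℂ (Fin 3 → ℂ), B 0 = a ∧ B 1 = b := by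
  obtain ⟨w, hw⟩ := exists_linearIndependent_snoc_of_lt_finrank h (by simp)
  refine ⟨basisOfLinearIndependentOfCardEqFinrank hw (by simp), ?_, ?_⟩
  · rw [coe_basisOfLinearIndependentOfCardEqFinrank]; rfl
  · rw [coe_basisOfLinearIndependentOfCardEqFinrank]; rfl

theorem polynomial_eval_aeval (Γ : Fin 3 → Polynomial ℂ) (t : ℂ) (P : Tern) :
    (aeval Γ P).eval t = eval (fun i => (Γ i).eval t) P := by
  induction P using MvPolynomial.induction_on with
  | C a => simp
  | add P Q hP hQ => rw [map_add, map_add, Polynomial.eval_add, hP, hQ]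
  | mul_X P i hP => rw [map_mul, map_mul, Polynomial.eval_mul, hP, aeval_X, eval_X]

theorem exists_eval_add_smul_eq_zero {h : Tern} {e : ℕ} (hh : h.IsHomogeneous (e + 1))
    {v : Fin 3 → ℂ} (hv : eval v h ≠ 0) (a : Fin 3 → ℂ) : ∃ l : ℂ, eval (a + l • v) h = 0 := by
  have hline : ∀ (a v : Fin 3 → ℂ) (t : ℂ),
      (aeval (fun i => Polynomial.C (a i) + Polynomial.X * Polynomial.C (v i)) h).eval t =
        eval (a + t • v) h := fun a v t => by
    rw [polynomial_eval_aeval]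
    congr 2
    funext i
    simp [mul_comm t]
  by_contra! hne
  set p := aeval (fun i => Polynomial.C (a i) + Polynomial.X * Polynomial.C (v i)) h with hp
  have hdeg : p.degree = 0 := by
    by_contra hd
    obtain ⟨l, hl⟩ := IsAlgClosed.exists_root p hd
    exact hne l (by rw [← hline]; exact hl)
  have hpc : ∀ t, p.eval t = p.coeff 0 := fun t => by
    conv_lhs => rw [Polynomial.eq_C_of_degree_eq_zero hdeg, Polynomial.eval_C]
  have h1 : (aeval (fun i => Polynomial.C (v i) + Polynomial.X * Polynomial.C (a i)) h -
      Polynomial.C (p.coeff 0) * Polynomial.X ^ (e + 1)) * Polynomial.X = 0 := by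
    refine Polynomial.funext fun t => ?_
    rw [Polynomial.eval_mul, Polynomial.eval_X, Polynomial.eval_zero, Polynomial.eval_sub, hline]
    by_cases ht : t = 0
    · rw [ht, mul_zero]
    · have h2 : v + t • a = t • (a + t⁻¹ • v) := by
        rw [smul_add, smul_smul, mul_inv_cancel₀ ht, one_smul, add_comm]
      rw [h2, eval_smul_of_isHomogeneous hh, ← hline, ← hp, hpc, Polynomial.eval_mul,
        Polynomial.eval_C, Polynomial.eval_pow, Polynomial.eval_X, mul_comm (t ^ _), sub_self,
        zero_mul]
  have h3 := congrArg (Polynomial.eval 0)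
    ((mul_eq_zero.1 h1).resolve_right Polynomial.X_ne_zero)
  rw [Polynomial.eval_sub, hline] at h3
  simp at h3
  exact hv h3

theorem exists_infinite_zeros {h : Tern} {e : ℕ} (hh : h.IsHomogeneous (e + 1)) :
    ∃ S : Set (Fin 3 → ℂ), S.Infinite ∧ Spread S ∧ ∀ u ∈ S, eval u h = 0 := by
  obtain ⟨v, hv0, hv⟩ : ∃ v : Fin 3 → ℂ, v ≠ 0 ∧ (h ≠ 0 → eval v h ≠ 0) := by
    by_cases h0 : h = 0
    · exact ⟨1, one_ne_zero, fun h1 => absurd h0 h1⟩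
    · obtain ⟨v, hv⟩ : ∃ v, eval v h ≠ 0 := by
        by_contra! hc
        exact h0 (MvPolynomial.funext fun x => by rw [hc, map_zero])
      refine ⟨v, ?_, fun _ => hv⟩
      rintro rfl
      have h1 := eval_smul_of_isHomogeneous hh 0 0
      rw [smul_zero, zero_pow (by omega), zero_mul] at h1
      exact hv h1
  obtain ⟨w, hw⟩ := exists_linearIndependent_pair_of_one_lt_finrank
    (show 1 < Module.finrank ℂ (Fin 3 → ℂ) by simp) hv0
  obtain ⟨B, hB0, hB1⟩ := exists_basis_of_linearIndependent_pair hw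
  have hroot : ∀ a : Fin 3 → ℂ, ∃ l : ℂ, eval (a + l • v) h = 0 := by
    intro a
    by_cases h0 : h = 0
    · exact ⟨0, by rw [h0, map_zero]⟩
    · exact exists_eval_add_smul_eq_zero hh (hv h0) a
  choose l hl using hroot
  let z : ℂ → Fin 3 → ℂ := fun t => (B 1 + t • B 2) + l (B 1 + t • B 2) • v
  have hz1 : ∀ t, B.coord 1 (z t) = 1 := fun t => by
    simp only [z, ← hB0, map_add, map_smul, Module.Basis.coord_apply, Module.Basis.repr_self]
    simp
  have hz2 : ∀ t, B.coord 2 (z t) = t := fun t => by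
    simp only [z, ← hB0, map_add, map_smul, Module.Basis.coord_apply, Module.Basis.repr_self]
    simp
  refine ⟨Set.range z, Set.infinite_range_of_injective fun s t hst => ?_, ⟨?_, ?_⟩, ?_⟩
  · rw [← hz2 s, hst, hz2]
  · rintro _ ⟨t, rfl⟩ h0
    have := hz1 t
    rw [h0, map_zero] at this
    exact zero_ne_one this
  · rintro _ ⟨s, rfl⟩ _ ⟨t, rfl⟩ c hc
    have h1 := congrArg (B.coord 1) hc
    rw [map_smul, hz1, hz1, smul_eq_mul, mul_one] at h1
    rw [hc, ← h1, one_smul]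
  · rintro _ ⟨t, rfl⟩
    exact hl _

/-- A parametrised curve of degree `e` on which exactly the multiples of `h` vanish. -/
structure IsParam (h : Tern) (e : ℕ) (Γ : Fin 3 → Polynomial ℂ) (S : Set (Fin 3 → ℂ)) : Prop where
  natDegree_le : ∀ i, (Γ i).natDegree ≤ e
  dvd_of_aeval : ∀ {P : Tern} {m : ℕ}, P.IsHomogeneous m → aeval Γ P = 0 → h ∣ P
  exists_eq : ∀ u ∈ S, ∃ s c : ℂ, u = c • fun i => (Γ i).eval s

theorem exists_isParam_linForm {φ : (Fin 3 → ℂ) →ₗ[ℂ] ℂ} (hφ : φ ≠ 0) {S : Set (Fin 3 → ℂ)}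
    (hS : S.Finite) (hS0 : ∀ u ∈ S, u ≠ 0) (hSφ : ∀ u ∈ S, φ u = 0) :
    ∃ Γ, IsParam (linForm φ) 1 Γ S := by
  obtain ⟨Z, hZinf, hZ, hZ0⟩ := exists_infinite_zeros (isHomogeneous_linForm φ)
  simp only [eval_linForm] at hZ0
  obtain ⟨b, hb, hbS⟩ := hZ.exists_avoiding hZinf hS
  obtain ⟨a, ha, haS⟩ := hZ.exists_avoiding hZinf (Set.finite_singleton b)
  have hab := linearIndependent_pair_of_ne (hZ.1 b hb) (haS b rfl)
  obtain ⟨B, hB0, hB1⟩ := exists_basis_of_linearIndependent_pair hab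
  have hrepr : ∀ x, x = B.repr x 0 • b + B.repr x 1 • a + B.repr x 2 • B 2 := fun x => by
    conv_lhs => rw [← B.sum_repr x, Fin.sum_univ_three, hB0, hB1]
  have hB2 : φ (B 2) ≠ 0 := fun h0 => hφ (LinearMap.ext fun x => by
    rw [hrepr x]; simp [hZ0 a ha, hZ0 b hb, h0])
  have hplane : ∀ x, φ x = 0 → x = B.repr x 0 • b + B.repr x 1 • a := fun x hx => by
    have h1 := congrArg φ (hrepr x)
    simp only [map_add, map_smul, hZ0 a ha, hZ0 b hb, hx, smul_eq_mul, mul_zero, zero_add] at h1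
    conv_lhs => rw [hrepr x, (mul_eq_zero.1 h1.symm).resolve_right hB2, zero_smul, add_zero]
  have hscale : ∀ x, φ x = 0 → B.repr x 1 ≠ 0 →
      x = B.repr x 1 • (a + (B.repr x 0 / B.repr x 1) • b) := fun x hx hx1 => by
    conv_lhs => rw [hplane x hx]
    rw [smul_add, smul_smul, mul_div_cancel₀ _ hx1, add_comm]
  refine ⟨fun i => Polynomial.C (a i) + Polynomial.X * Polynomial.C (b i), ⟨fun i => ?_, ?_, ?_⟩⟩
  · refine (Polynomial.natDegree_add_le _ _).trans (max_le (by simp) ?_)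
    exact (Polynomial.natDegree_mul_le).trans (by simp)
  · intro P m hP h0
    have hcurve : ∀ t : ℂ, eval (a + t • b) P = 0 := fun t => by
      have := congrArg (Polynomial.eval t) h0
      rw [polynomial_eval_aeval] at this
      simpa [Pi.add_def, mul_comm t] using this
    have h1 : linForm φ ∣ linForm (B.coord 1) * P := by
      refine linForm_dvd hφ fun x hx => ?_
      rw [map_mul, eval_linForm, Module.Basis.coord_apply]
      by_cases hx1 : B.repr x 1 = 0
      · rw [hx1, zero_mul]
      · rw [hscale x hx hx1, eval_smul_of_isHomogeneous hP, hcurve, mul_zero, mul_zero]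
    have hne : linForm φ ≠ 0 := fun h2 => hφ (LinearMap.ext fun x => by
      rw [← eval_linForm, h2]; simp)
    refine ((prime_of_isHomogeneous_one (isHomogeneous_linForm φ) hne).dvd_or_dvd
      h1).resolve_left ?_
    rintro ⟨τ, hτ⟩
    have h2 := congrArg (eval a) hτ
    rw [map_mul, eval_linForm, eval_linForm, hZ0 a ha, zero_mul, ← hB1] at h2
    simp at h2
  · intro u hu
    have hu1 : B.repr u 1 ≠ 0 := fun h1 => by
      have h2 := hplane u (hSφ u hu)
      rw [h1, zero_smul, add_zero] at h2
      exact ne_smul_symm (hS0 u hu) (hbS u hu) _ h2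
    refine ⟨B.repr u 0 / B.repr u 1, B.repr u 1, ?_⟩
    conv_lhs => rw [hscale u (hSφ u hu) hu1]
    congr 1
    funext i
    simp [mul_comm (B.repr u 0 / B.repr u 1)]

theorem not_irreducible_of_linForm_dvd {φ : (Fin 3 → ℂ) →ₗ[ℂ] ℂ} {q : Tern}
    (hq : q.IsHomogeneous 2) (hd : linForm φ ∣ q) : ¬ Irreducible q := by
  intro hirr
  obtain ⟨τ, hτ, rfl⟩ := exists_homogeneous_eq_mul (k := 1) (isHomogeneous_linForm φ) hq hd
  rcases hirr.isUnit_or_isUnit rfl with h | h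
  · exact one_ne_zero (isUnit_of_isHomogeneous (isHomogeneous_linForm φ) h)
  · exact one_ne_zero (isUnit_of_isHomogeneous hτ h)

/-- Two distinct points of an irreducible conic are not conjugate. -/
theorem bilin_ne_zero {q : Tern} (hq : q.IsHomogeneous 2) (hirr : Irreducible q)
    {β : LinearMap.BilinForm ℂ (Fin 3 → ℂ)} (hsymm : ∀ x y, β x y = β y x)
    (hβ : ∀ x, eval x q = β x x) {a b : Fin 3 → ℂ} (hab : LinearIndependent ℂ ![a, b])
    (ha : eval a q = 0) (hb : eval b q = 0) : β a b ≠ 0 := by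
  intro h0
  obtain ⟨B, hB0, hB1⟩ := exists_basis_of_linearIndependent_pair hab
  refine not_irreducible_of_linForm_dvd hq (φ := B.coord 2) (linForm_dvd ?_ fun x hx => ?_) hirr
  · intro h1
    have := LinearMap.congr_fun h1 (B 2)
    simp at this
  · have hx' : x = B.repr x 0 • a + B.repr x 1 • b := by
      conv_lhs => rw [← B.sum_repr x, Fin.sum_univ_three, hB0, hB1]
      rw [Module.Basis.coord_apply] at hx
      rw [hx, zero_smul, add_zero]
    rw [hβ] at ha hb
    rw [hβ, hx']
    simp only [map_add, map_smul, LinearMap.add_apply, LinearMap.smul_apply, smul_eq_mul, ha, hb,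
      h0, hsymm b a]
    simp

theorem exists_isParam_conic {q : Tern} (hq : q.IsHomogeneous 2) (hirr : Irreducible q)
    {S : Set (Fin 3 → ℂ)} (hS : S.Finite) (hS0 : ∀ u ∈ S, u ≠ 0) (hSq : ∀ u ∈ S, eval u q = 0) :
    ∃ Γ, IsParam q 2 Γ S := by
  obtain ⟨β, hsymm, hβ, -⟩ := exists_bilin hq
  obtain ⟨Z, hZinf, hZ, hZ0⟩ := exists_infinite_zeros hq
  obtain ⟨b, hb, hbS⟩ := hZ.exists_avoiding hZinf hS
  obtain ⟨z, hz, hzS⟩ := hZ.exists_avoiding hZinf (hS.insert b)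
  have hzb := linearIndependent_pair_of_ne (hZ.1 b hb) (hzS b (Set.mem_insert _ _))
  obtain ⟨B, hB0, hB1⟩ := exists_basis_of_linearIndependent_pair hzb
  set a := B 2 with ha
  have hbb : β b b = 0 := by rw [← hβ, hZ0 b hb]
  have hzz : β z z = 0 := by rw [← hβ, hZ0 z hz]
  have hbz : β b z ≠ 0 := bilin_ne_zero hq hirr hsymm hβ hzb (hZ0 b hb) (hZ0 z hz)
  have hrepr : ∀ x, x = B.repr x 0 • b + B.repr x 1 • z + B.repr x 2 • a := fun x => by
    conv_lhs => rw [← B.sum_repr x, Fin.sum_univ_three, hB0, hB1]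
  let L : Tern := linForm ((2 : ℂ) • β z)
  let G : Fin 3 → Tern := fun i => C (z i) * q - L * X i
  have hG : ∀ x, (fun i => eval x (G i)) = β x x • z - (2 * β z x) • x := fun x => by
    funext i
    simp [G, L, hβ, eval_linForm, mul_comm (β x x)]
  let Γ : Fin 3 → Polynomial ℂ := fun i =>
    Polynomial.C (z i) * (Polynomial.C (β a a) + Polynomial.C (2 * β a b) * Polynomial.X) -
      (Polynomial.C (2 * β z a) + Polynomial.C (2 * β z b) * Polynomial.X) *
        (Polynomial.C (a i) + Polynomial.C (b i) * Polynomial.X)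
  have hΓ : ∀ s, (fun i => (Γ i).eval s) = β (a + s • b) (a + s • b) • z -
      (2 * β z (a + s • b)) • (a + s • b) := fun s => by
    funext i
    simp [Γ, hbb, hsymm b a]
    ring
  have hGΓ : ∀ x, B.repr x 2 ≠ 0 → (fun i => eval x (G i)) =
      (B.repr x 2) ^ 2 • fun i => (Γ i).eval (B.repr x 0 / B.repr x 2) := fun x hx => by
    rw [hG, hΓ]
    funext i
    set l := B.repr x 1
    set m := B.repr x 2
    have hs : B.repr x 0 = m * (B.repr x 0 / m) := by field_simp
    set s := B.repr x 0 / m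
    have hx' : x = (m * s) • b + l • z + m • a := by rw [← hs]; exact hrepr x
    rw [hx']
    simp only [map_add, map_smul, LinearMap.add_apply, LinearMap.smul_apply, smul_eq_mul,
      Pi.smul_apply, Pi.add_apply, Pi.sub_apply, hbb, hzz, hsymm b a, hsymm b z, hsymm a z]
    ring
  refine ⟨Γ, ⟨fun i => ?_, ?_, ?_⟩⟩
  · have h1 : ∀ c d : ℂ, (Polynomial.C c + Polynomial.C d * Polynomial.X).natDegree ≤ 1 :=
      fun c d => (Polynomial.natDegree_add_le _ _).trans (max_le (by simp)
        ((Polynomial.natDegree_C_mul_le _ _).trans (by simp)))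
    refine (Polynomial.natDegree_sub_le _ _).trans (max_le ?_ ?_)
    · exact (Polynomial.natDegree_C_mul_le _ _).trans ((h1 _ _).trans (by norm_num))
    · exact (Polynomial.natDegree_mul_le).trans (add_le_add (h1 _ _) (h1 _ _))
  · intro P m hP h0
    have hcurve : ∀ t : ℂ, eval (fun i => (Γ i).eval t) P = 0 := fun t => by
      rw [← polynomial_eval_aeval, h0, Polynomial.eval_zero]
    have h1 : linForm (B.coord 2) * aeval G P = 0 := by
      refine MvPolynomial.funext fun x => ?_
      rw [map_mul, eval_linForm, Module.Basis.coord_apply, eval_aeval, map_zero]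
      by_cases hx : B.repr x 2 = 0
      · rw [hx, zero_mul]
      · rw [hGΓ x hx, eval_smul_of_isHomogeneous hP, hcurve, mul_zero, mul_zero]
    have h2 : linForm (B.coord 2) ≠ 0 := fun h2 => by
      have := congrArg (eval a) h2
      rw [eval_linForm] at this
      simp [ha] at this
    have h3 := dvd_aeval_sub_aeval (h := q) (c := G) (c' := fun i => (-L) * X i)
      (fun i => ⟨C (z i), by simp only [G]; ring⟩) P
    rw [(mul_eq_zero.1 h1).resolve_left h2, zero_sub, dvd_neg,
      aeval_mul_X_of_isHomogeneous hP] at h3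
    refine (hirr.prime.dvd_or_dvd h3).resolve_left fun h4 => ?_
    have h5 := le_of_dvd_of_isHomogeneous hq (isHomogeneous_linForm _) (fun h6 => ?_)
      (dvd_neg.1 (hirr.prime.dvd_of_dvd_pow h4))
    · omega
    · have := congrArg (eval b) h6
      rw [eval_linForm] at this
      simp [hsymm z b, hbz] at this
  · intro u hu
    have hzu : β z u ≠ 0 := by
      refine bilin_ne_zero hq hirr hsymm hβ ?_ (hZ0 z hz) (hSq u hu)
      exact linearIndependent_pair_of_ne (hZ.1 z hz)
        (ne_smul_symm (hS0 u hu) (hzS u (Set.mem_insert_of_mem _ hu)))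
    have huu : β u u = 0 := by rw [← hβ, hSq u hu]
    have hu2 : B.repr u 2 ≠ 0 := fun h1 => by
      have h2 := hrepr u
      rw [h1, zero_smul, add_zero] at h2
      have h3 : 2 * (B.repr u 0 * B.repr u 1 * β b z) = 0 := by
        rw [← huu]
        conv_rhs => rw [h2]
        simp only [map_add, map_smul, LinearMap.add_apply, LinearMap.smul_apply, smul_eq_mul,
          hbb, hzz, hsymm z b]
        ring
      have h4 : B.repr u 0 = 0 ∨ B.repr u 1 = 0 := by simpa [hbz] using h3
      rcases h4 with h4 | h4
      · rw [h4, zero_smul, zero_add] at h2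
        exact ne_smul_symm (hS0 u hu) (hzS u (Set.mem_insert_of_mem _ hu)) _ h2
      · rw [h4, zero_smul, add_zero] at h2
        exact ne_smul_symm (hS0 u hu) (hbS u hu) _ h2
    refine ⟨B.repr u 0 / B.repr u 2, -(2 * β z u)⁻¹ * (B.repr u 2) ^ 2, ?_⟩
    rw [← smul_smul, ← hGΓ u hu2, hG, huu, zero_smul, zero_sub, smul_neg, neg_smul, neg_neg,
      smul_smul, inv_mul_cancel₀ (by simpa using hzu), one_smul]

/-- An irreducible conic is smooth. -/
theorem exists_eval_pderiv_ne_zero {q : Tern} (hq : q.IsHomogeneous 2) (hirr : Irreducible q)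
    {u : Fin 3 → ℂ} (hu : u ≠ 0) (huq : eval u q = 0) : ∃ i, eval u (pderiv i q) ≠ 0 := by
  by_contra! h
  obtain ⟨β, hsymm, hβ, hβq⟩ := exists_bilin hq
  obtain ⟨Z, hZinf, hZ, hZ0⟩ := exists_infinite_zeros hq
  obtain ⟨z, hz, hzu⟩ := hZ.exists_avoiding hZinf (Set.finite_singleton u)
  refine bilin_ne_zero hq hirr hsymm hβ (linearIndependent_pair_of_ne hu (hzu u rfl)) huq
    (hZ0 z hz) ?_
  rw [hsymm, hβq]
  simp [h]

theorem derivative_aeval (Γ : Fin 3 → Polynomial ℂ) (P : Tern) :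
    Polynomial.derivative (aeval Γ P) =
      ∑ i, aeval Γ (pderiv i P) * Polynomial.derivative (Γ i) := by
  induction P using MvPolynomial.induction_on with
  | C a => simp
  | add P Q hP hQ => simp only [map_add, hP, hQ, add_mul, Finset.sum_add_distrib]
  | mul_X P j hP =>
    have h1 : ∀ i, aeval Γ (pderiv i (P * X j)) * Polynomial.derivative (Γ i) =
        aeval Γ (pderiv i P) * Polynomial.derivative (Γ i) * Γ j +
          if j = i then aeval Γ P * Polynomial.derivative (Γ i) else 0 := fun i => by
      rw [pderiv_mul, map_add, map_mul, map_mul, aeval_X]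
      split_ifs with hij
      · rw [hij, pderiv_X_self, map_one]
        ring
      · rw [pderiv_X_of_ne hij, map_zero]
        ring
    rw [Finset.sum_congr rfl fun i _ => h1 i, Finset.sum_add_distrib, Finset.sum_ite_eq,
      if_pos (Finset.mem_univ j), ← Finset.sum_mul, ← hP, map_mul, aeval_X,
      Polynomial.derivative_mul]

theorem natDegree_aeval_le {Γ : Fin 3 → Polynomial ℂ} {e : ℕ} (hΓ : ∀ i, (Γ i).natDegree ≤ e)
    {P : Tern} {m : ℕ} (hP : P.IsHomogeneous m) : (aeval Γ P).natDegree ≤ m * e :=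
  MvPolynomial.aeval_natDegree_le P hP.totalDegree_le _ hΓ

/-- The parameters of a spread set of points on a parametrised curve. -/
theorem IsParam.exists_params {h : Tern} {e : ℕ} {Γ : Fin 3 → Polynomial ℂ}
    {S : Finset (Fin 3 → ℂ)} (hΓ : IsParam h e Γ S) (hS : Spread (S : Set (Fin 3 → ℂ))) :
    ∃ T : Finset ℂ, T.card = S.card ∧ ∀ t ∈ T, ∀ {P : Tern} {m : ℕ}, P.IsHomogeneous m →
      (∀ u ∈ S, eval u P = 0) → (aeval Γ P).eval t = 0 := by
  classical
  choose! s c hsc using hΓ.exists_eq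
  have hc0 : ∀ u ∈ S, c u ≠ 0 := fun u hu h0 => hS.1 u hu (by rw [hsc u hu, h0, zero_smul])
  refine ⟨S.image s, Finset.card_image_of_injOn fun u hu v hv huv => ?_, ?_⟩
  · refine hS.2 u hu v hv (c u * (c v)⁻¹) ?_
    calc u = c u • fun i => (Γ i).eval (s u) := hsc u hu
      _ = (c u * (c v)⁻¹) • c v • fun i => (Γ i).eval (s v) := by
        rw [smul_smul, mul_assoc, inv_mul_cancel₀ (hc0 v hv), mul_one, huv]
      _ = (c u * (c v)⁻¹) • v := by rw [← hsc v hv]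
  · intro t ht P m hP h0
    obtain ⟨u, hu, rfl⟩ := Finset.mem_image.1 ht
    have h1 := h0 u hu
    rw [hsc u hu, eval_smul_of_isHomogeneous hP] at h1
    rw [polynomial_eval_aeval]
    exact (mul_eq_zero.1 h1).resolve_left (pow_ne_zero _ (hc0 u hu))

theorem IsParam.dvd {h : Tern} {e : ℕ} {Γ : Fin 3 → Polynomial ℂ} {S : Finset (Fin 3 → ℂ)}
    (hΓ : IsParam h e Γ S) (hS : Spread (S : Set (Fin 3 → ℂ))) {P : Tern} {m : ℕ}
    (hP : P.IsHomogeneous m) (h0 : ∀ u ∈ S, eval u P = 0) (hcard : m * e < S.card) : h ∣ P := by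
  obtain ⟨T, hT, hT0⟩ := hΓ.exists_params hS
  refine hΓ.dvd_of_aeval hP (Polynomial.eq_zero_of_natDegree_lt_card_of_eval_eq_zero' _ T
    (fun t ht => hT0 t ht hP h0) ?_)
  exact lt_of_le_of_lt (natDegree_aeval_le hΓ.natDegree_le hP) (by omega)

theorem IsParam.dvd_of_pderiv {h : Tern} {e : ℕ} {Γ : Fin 3 → Polynomial ℂ}
    {S : Finset (Fin 3 → ℂ)} (hΓ : IsParam h e Γ S) (hS : Spread (S : Set (Fin 3 → ℂ)))
    {P : Tern} {m : ℕ} (hP : P.IsHomogeneous m) (h0 : ∀ u ∈ S, eval u P = 0)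
    (h1 : ∀ i, ∀ u ∈ S, eval u (pderiv i P) = 0) (hcard : m * e < 2 * S.card) : h ∣ P := by
  obtain ⟨T, hT, hT0⟩ := hΓ.exists_params hS
  refine hΓ.dvd_of_aeval hP ?_
  by_contra hne
  have hdvd : ∏ t ∈ T, (Polynomial.X - Polynomial.C t) ^ 2 ∣ aeval Γ P := by
    refine Finset.prod_dvd_of_coprime (fun s _ t _ hst => ?_) fun t ht => ?_
    · exact (Polynomial.isCoprime_X_sub_C_of_isUnit_sub (sub_ne_zero.2 hst).isUnit).pow
    · rw [← Polynomial.le_rootMultiplicity_iff hne]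
      refine (Polynomial.one_lt_rootMultiplicity_iff_isRoot hne).2 ⟨hT0 t ht hP h0, ?_⟩
      rw [derivative_aeval, Polynomial.IsRoot.def, Polynomial.eval_finsetSum]
      refine Finset.sum_eq_zero fun i _ => ?_
      rw [Polynomial.eval_mul, hT0 t ht hP.pderiv (h1 i), zero_mul]
  have hdeg := Polynomial.natDegree_le_of_dvd hdvd hne
  rw [Polynomial.natDegree_prod _ _ fun t _ => pow_ne_zero _ (Polynomial.X_sub_C_ne_zero t)] at hdeg
  simp only [Polynomial.natDegree_pow, Polynomial.natDegree_X_sub_C, Finset.sum_const,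
    smul_eq_mul] at hdeg
  have := natDegree_aeval_le hΓ.natDegree_le hP
  omega

theorem linForm_dvd_of_card {φ : (Fin 3 → ℂ) →ₗ[ℂ] ℂ} (hφ : φ ≠ 0) {S : Finset (Fin 3 → ℂ)}
    (hS : Spread (S : Set (Fin 3 → ℂ))) (hSφ : ∀ u ∈ S, φ u = 0) {P : Tern} {m : ℕ}
    (hP : P.IsHomogeneous m) (h0 : ∀ u ∈ S, eval u P = 0) (hcard : m < S.card) :
    linForm φ ∣ P := by
  obtain ⟨Γ, hΓ⟩ := exists_isParam_linForm hφ S.finite_toSet hS.1 hSφ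
  exact hΓ.dvd hS hP h0 (by omega)

theorem conic_dvd_of_card {q : Tern} (hq : q.IsHomogeneous 2) (hirr : Irreducible q)
    {S : Finset (Fin 3 → ℂ)} (hS : Spread (S : Set (Fin 3 → ℂ))) (hSq : ∀ u ∈ S, eval u q = 0)
    {P : Tern} {m : ℕ} (hP : P.IsHomogeneous m) (h0 : ∀ u ∈ S, eval u P = 0)
    (hcard : 2 * m < S.card) : q ∣ P := by
  obtain ⟨Γ, hΓ⟩ := exists_isParam_conic hq hirr S.finite_toSet hS.1 hSq
  exact hΓ.dvd hS hP h0 (by omega)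

theorem conic_dvd_of_pderiv {q : Tern} (hq : q.IsHomogeneous 2) (hirr : Irreducible q)
    {S : Finset (Fin 3 → ℂ)} (hS : Spread (S : Set (Fin 3 → ℂ))) (hSq : ∀ u ∈ S, eval u q = 0)
    {P : Tern} {m : ℕ} (hP : P.IsHomogeneous m) (h0 : ∀ u ∈ S, eval u P = 0)
    (h1 : ∀ i, ∀ u ∈ S, eval u (pderiv i P) = 0) (hcard : m < S.card) : q ∣ P := by
  obtain ⟨Γ, hΓ⟩ := exists_isParam_conic hq hirr S.finite_toSet hS.1 hSq
  exact hΓ.dvd_of_pderiv hS hP h0 h1 (by omega)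

theorem eq_mul_linForm_of_not_irreducible {q : Tern} (hq : q.IsHomogeneous 2) (h0 : q ≠ 0)
    (hirr : ¬ Irreducible q) : ∃ φ ψ, q = linForm φ * linForm ψ := by
  have hnu : ¬ IsUnit q := fun h => two_ne_zero (isUnit_of_isHomogeneous hq h)
  rw [irreducible_iff] at hirr
  push Not at hirr
  obtain ⟨a, b, hab, ha, hb⟩ := hirr hnu
  have hdeg : ∀ {a b : Tern}, q = a * b → ¬ IsUnit a → ¬ IsUnit b → a.totalDegree = 1 := by
    intro a b hab ha hb
    have hne : a * b ≠ 0 := hab ▸ h0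
    have h1 : ∀ {a : Tern}, a ≠ 0 → ¬ IsUnit a → a.totalDegree ≠ 0 := fun {a} ha0 hau h2 => by
      obtain h3 := totalDegree_eq_zero_iff_eq_C.1 h2
      refine hau ?_
      rw [h3]
      refine IsUnit.map C (isUnit_iff_ne_zero.2 fun h4 => ?_)
      rw [h4, C_0] at h3
      exact ha0 h3
    have h2 := totalDegree_mul_of_isDomain (left_ne_zero_of_mul hne) (right_ne_zero_of_mul hne)
    rw [← hab, hq.totalDegree h0] at h2
    have h3 := h1 (left_ne_zero_of_mul hne) ha
    have h4 := h1 (right_ne_zero_of_mul hne) hb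
    omega
  have ha1 := hdeg hab ha hb
  have hb1 := hdeg (hab.trans (mul_comm a b)) hb ha
  obtain ⟨φ, hφ⟩ := exists_eq_linForm (homogeneousComponent_isHomogeneous 1 a)
  obtain ⟨ψ, hψ⟩ := exists_eq_linForm (homogeneousComponent_isHomogeneous 1 b)
  refine ⟨φ, ψ, ?_⟩
  have h1 := sum_homogeneousComponent a
  rw [ha1, Finset.sum_range_succ, Finset.sum_range_one] at h1
  rw [← homogeneousComponent_eq_self hq, hab, ← h1, add_mul, map_add,
    homogeneousComponent_mul_left (homogeneousComponent_isHomogeneous 1 a) b 1, ← hφ, ← hψ]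
  have h2 := homogeneousComponent_mul_left (homogeneousComponent_isHomogeneous 0 a) b 2
  rw [homogeneousComponent_eq_zero 2 b (by omega), mul_zero] at h2
  rw [show 2 = 0 + 2 from rfl, h2, zero_add]

namespace Frame

variable (F : Frame) (y : ℂ)

theorem dvd_taylor_of_dvd_xi {h : Tern} (h2 : h ∣ F.taylor y 2) (hξ : h ∣ F.xi h) {k : ℕ}
    (hk : 2 ≤ k) : h ∣ F.taylor y k := by
  induction k, hk using Nat.le_induction with
  | base => exact h2
  | succ k _ ih =>
    obtain ⟨P, hP⟩ := ih
    rw [taylor, hP, xi_mul]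
    exact (dvd_add (dvd_mul_right _ _) (hξ.mul_left _)).mul_left _

theorem dvd_xi_taylor_two {h : Tern} (h3 : h ∣ F.taylor y 3) : h ∣ F.xi (F.taylor y 2) := by
  rw [xi_taylor]
  exact h3.mul_left _

theorem dvd_xi_of_dvd_taylor_three {φ ψ : (Fin 3 → ℂ) →ₗ[ℂ] ℂ}
    (h2 : F.taylor y 2 = linForm φ * linForm ψ) (hφ : linForm φ ≠ 0)
    (hd : ¬ linForm φ ∣ linForm ψ) (h3 : linForm φ ∣ F.taylor y 3) :
    linForm φ ∣ F.xi (linForm φ) := by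
  have h4 := F.dvd_xi_taylor_two y h3
  rw [h2, xi_mul] at h4
  exact ((prime_of_isHomogeneous_one (isHomogeneous_linForm φ) hφ).dvd_or_dvd
    ((dvd_add_right (dvd_mul_right _ _)).1 h4)).resolve_left hd

theorem dvd_xi_of_taylor_two_eq_mul_sq {l : Tern} (hl : l.IsHomogeneous 1) {a : ℂ}
    (h2 : F.taylor y 2 = C a * (l * l)) (h0 : F.taylor y 2 ≠ 0) : l ∣ F.xi l := by
  have hl0 : l ≠ 0 := by
    rintro rfl
    exact h0 (by rw [h2]; simp)
  have ha0 : a ≠ 0 := by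
    rintro rfl
    exact h0 (by rw [h2]; simp)
  have hprime := prime_of_isHomogeneous_one hl hl0
  have hpd : ∀ m, l ∣ pderiv m (F.taylor y 3) := fun m => by
    rw [pderiv_taylor_succ, h2, Derivation.leibniz, Derivation.leibniz]
    simp only [smul_eq_mul]
    exact ⟨C a * (2 * coeffwise (F.D m) l) + l * coeffwise (F.D m) (C a), by ring⟩
  obtain ⟨P, hP⟩ := dvd_of_dvd_pderiv (F.isHomogeneous_taylor y 3) hpd
  obtain ⟨i, hi⟩ : ∃ i, pderiv i l ≠ 0 := by
    by_contra! hc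
    exact hl0 (eq_zero_of_isHomogeneous_of_pderiv hl hc)
  have hlP : l ∣ P := by
    have h4 := hpd i
    rw [hP, pderiv_mul] at h4
    refine (hprime.dvd_or_dvd ((dvd_add_left (dvd_mul_right _ _)).1 h4)).resolve_left fun h5 => ?_
    have := le_of_dvd_of_isHomogeneous hl hl.pderiv hi h5
    omega
  obtain ⟨Q, rfl⟩ := hlP
  have h4 : l * (l * Q * C 3) = l * (C (2 * a) * F.xi l + l * F.xi (C a)) := by
    have h5 := F.xi_taylor y 2
    rw [hP, h2, xi_mul, xi_mul] at h5
    rw [C_mul, show (C 2 : Tern) = 2 from map_ofNat C 2]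
    norm_num at h5
    linear_combination -h5
  have h6 : C (2 * a) * F.xi l = l * (Q * C 3 - F.xi (C a)) := by
    linear_combination -(mul_left_cancel₀ hl0 h4)
  have h7 : F.xi l = C (2 * a)⁻¹ * (C (2 * a) * F.xi l) := by
    rw [← mul_assoc, ← C_mul, inv_mul_cancel₀ (by simpa using ha0), C_1, one_mul]
  rw [h7, h6]
  exact (dvd_mul_right _ _).mul_left _

/-- If the quadratic and cubic terms have too many common zeros, then all terms of the expansion
vanish on a common curve. -/
theorem exists_dvd_taylor {S : Finset (Fin 3 → ℂ)} (hS : Spread (S : Set (Fin 3 → ℂ)))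
    (hS2 : ∀ u ∈ S, eval u (F.taylor y 2) = 0) (hS3 : ∀ u ∈ S, eval u (F.taylor y 3) = 0)
    (hcard : 6 ≤ S.card) (hirr : Irreducible (F.taylor y 2) → 7 ≤ S.card) :
    ∃ (h : Tern) (e : ℕ), h.IsHomogeneous (e + 1) ∧ ∀ k, 2 ≤ k → h ∣ F.taylor y k := by
  classical
  have hq := F.isHomogeneous_taylor y 2
  by_cases h0 : F.taylor y 2 = 0
  · refine ⟨0, 0, isHomogeneous_zero _ _ _, fun k hk => ?_⟩
    exact F.dvd_taylor_of_dvd_xi y (by rw [h0]) (by simp [xi]) hk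
  by_cases hi : Irreducible (F.taylor y 2)
  · refine ⟨_, 1, hq, fun k hk => F.dvd_taylor_of_dvd_xi y dvd_rfl ?_ hk⟩
    exact F.dvd_xi_taylor_two y (conic_dvd_of_card hq hi hS hS2 (F.isHomogeneous_taylor y 3) hS3
      (by have := hirr hi; omega))
  obtain ⟨φ, ψ, hφψ⟩ := eq_mul_linForm_of_not_irreducible hq h0 hi
  suffices hs : linForm φ ∣ F.xi (linForm φ) ∨ linForm ψ ∣ F.xi (linForm ψ) by
    rcases hs with hs | hs
    · exact ⟨_, 0, isHomogeneous_linForm φ, fun k hk =>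
        F.dvd_taylor_of_dvd_xi y (hφψ ▸ dvd_mul_right _ _) hs hk⟩
    · exact ⟨_, 0, isHomogeneous_linForm ψ, fun k hk =>
        F.dvd_taylor_of_dvd_xi y (hφψ ▸ dvd_mul_left _ _) hs hk⟩
  have hne : linForm φ * linForm ψ ≠ 0 := hφψ ▸ h0
  by_cases hd : linForm φ ∣ linForm ψ
  · obtain ⟨τ, hτ, hψ⟩ := exists_homogeneous_eq_mul (k := 0) (isHomogeneous_linForm φ)
      (isHomogeneous_linForm ψ) hd
    obtain ⟨a, rfl⟩ := eq_C_of_isHomogeneous_zero hτ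
    exact .inl (F.dvd_xi_of_taylor_two_eq_mul_sq y (isHomogeneous_linForm φ) (a := a)
      (by rw [hφψ, hψ]; ring) h0)
  by_cases hd' : linForm ψ ∣ linForm φ
  · obtain ⟨τ, hτ, hφ⟩ := exists_homogeneous_eq_mul (k := 0) (isHomogeneous_linForm ψ)
      (isHomogeneous_linForm φ) hd'
    obtain ⟨a, rfl⟩ := eq_C_of_isHomogeneous_zero hτ
    exact .inr (F.dvd_xi_of_taylor_two_eq_mul_sq y (isHomogeneous_linForm ψ) (a := a)
      (by rw [hφψ, hφ]; ring) h0)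
  obtain ⟨ν, hν, hν0⟩ := Submodule.exists_mem_ne_zero_of_ne_bot
    (LinearMap.ker_ne_bot_of_finrank_lt (f := φ.prod ψ) (by simp))
  obtain ⟨hφν, hψν⟩ : φ ν = 0 ∧ ψ ν = 0 := by simpa using hν
  have hν3 : eval ν (F.taylor y 3) = 0 := by
    have h1 := congrArg (eval ν) (F.xi_taylor y 2)
    rw [hφψ, xi_mul, map_add, map_mul, map_mul, eval_linForm, eval_linForm, hφν, hψν, map_mul,
      eval_C] at h1
    norm_num at h1
    exact h1
  set S' := S.filter fun u => ∀ c : ℂ, u ≠ c • ν with hS'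
  have hS'card : 5 ≤ S'.card := by
    have h1 := Finset.card_filter_add_card_filter_not (s := S) fun u => ∀ c : ℂ, u ≠ c • ν
    have h2 : (S.filter fun u => ¬ ∀ c : ℂ, u ≠ c • ν).card ≤ 1 := by
      refine Finset.card_le_one.2 fun u hu v hv => ?_
      simp only [Finset.mem_filter, not_forall, not_not] at hu hv
      obtain ⟨hu, c, hc⟩ := hu
      obtain ⟨hv, c', hc'⟩ := hv
      have hc0 : c' ≠ 0 := by
        rintro rfl
        exact hS.1 v hv (by simpa using hc')
      refine hS.2 u hu v hv (c * c'⁻¹) ?_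
      rw [hc', smul_smul, mul_assoc, inv_mul_cancel₀ hc0, mul_one, hc]
    rw [← hS'] at h1
    omega
  have hline : ∀ χ : (Fin 3 → ℂ) →ₗ[ℂ] ℂ, linForm χ ≠ 0 → χ ν = 0 →
      3 ≤ (S'.filter fun u => χ u = 0).card → linForm χ ∣ F.taylor y 3 := by
    intro χ hχ hχν hc
    have hsp : Spread (insert ν (S'.filter fun u => χ u = 0 : Finset _) : Set (Fin 3 → ℂ)) := by
      refine (hS.mono ?_).insert hν0 fun u hu => ?_
      · intro u hu
        simp only [Finset.coe_filter, Set.mem_ofPred_eq, hS', Finset.mem_filter] at hu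
        exact hu.1.1
      · simp only [Finset.coe_filter, Set.mem_ofPred_eq, hS', Finset.mem_filter] at hu
        exact ne_smul_symm hν0 hu.1.2
    rw [← Finset.coe_insert] at hsp
    refine linForm_dvd_of_card (fun h1 => hχ ?_) hsp (fun u hu => ?_) (F.isHomogeneous_taylor y 3)
      (fun u hu => ?_) ?_
    · rw [h1]; simp [linForm]
    · rcases Finset.mem_insert.1 hu with rfl | hu
      · exact hχν
      · exact (Finset.mem_filter.1 hu).2
    · rcases Finset.mem_insert.1 hu with rfl | hu
      · exact hν3
      · exact hS3 u (Finset.mem_filter.1 (Finset.mem_filter.1 hu).1).1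
    · rw [Finset.card_insert_of_notMem]
      · omega
      · simp only [hS', Finset.mem_filter, not_and]
        exact fun h1 => absurd (one_smul ℂ ν).symm (h1.2 1)
  have hunion : S'.card ≤
      (S'.filter fun u => φ u = 0).card + (S'.filter fun u => ψ u = 0).card := by
    refine (Finset.card_le_card fun u hu => ?_).trans (Finset.card_union_le _ _)
    have h1 := hS2 u (Finset.mem_filter.1 hu).1
    rw [hφψ, map_mul, eval_linForm, eval_linForm, mul_eq_zero] at h1
    exact Finset.mem_union.2 (h1.imp (fun h => Finset.mem_filter.2 ⟨hu, h⟩)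
      fun h => Finset.mem_filter.2 ⟨hu, h⟩)
  rcases (show 3 ≤ (S'.filter fun u => φ u = 0).card ∨ 3 ≤ (S'.filter fun u => ψ u = 0).card by
    omega) with h3 | h3
  · exact .inl (F.dvd_xi_of_dvd_taylor_three y hφψ (left_ne_zero_of_mul hne) hd
      (hline φ (left_ne_zero_of_mul hne) hφν h3))
  · exact .inr (F.dvd_xi_of_dvd_taylor_three y (hφψ.trans (mul_comm _ _))
      (right_ne_zero_of_mul hne) hd' (hline ψ (right_ne_zero_of_mul hne) hψν h3))

end Frame

theorem finrank_homogeneousSubmodule (k n : ℕ) :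
    Module.finrank ℂ (homogeneousSubmodule (Fin k) ℂ n) = (k + n - 1).choose n := by
  have h1 : homogeneousSubmodule (Fin k) ℂ n = Submodule.span ℂ (Set.range
      fun d : Finset.finsuppAntidiag (Finset.univ : Finset (Fin k)) n =>
        (monomial (d : Fin k →₀ ℕ) (1 : ℂ))) := by
    rw [homogeneousSubmodule_eq_finsupp_supported, AddMonoidAlgebra.supported_eq_span_single]
    congr 1
    ext P
    simp only [Set.mem_image, Set.mem_range, Subtype.exists, Finset.mem_finsuppAntidiag,
      Finset.subset_univ, and_true, Finsupp.degree_eq_sum, Set.mem_ofPred_eq, exists_prop]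
    rfl
  rw [h1, finrank_span_eq_card]
  · rw [Fintype.card_coe, Finset.card_finsuppAntidiag_nat_eq_choose, Finset.card_univ,
      Fintype.card_fin]
  · have h2 := (basisMonomials (Fin k) ℂ).linearIndependent
    rw [coe_basisMonomials] at h2
    exact h2.comp _ Subtype.val_injective

instance (k n : ℕ) : Module.Finite ℂ (homogeneousSubmodule (Fin k) ℂ n) :=
  Module.Finite.iff_fg.2 (homogeneousSubmodule_fg (Fin k) ℂ n)

theorem finrank_le_finrank_inf_ker_add {M N : Type} [AddCommGroup M] [Module ℂ M]
    [AddCommGroup N] [Module ℂ N] (g : M →ₗ[ℂ] N) {V : Submodule ℂ M} {T : Submodule ℂ N}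
    [Module.Finite ℂ V] [Module.Finite ℂ T] (h : V.map g ≤ T) :
    Module.finrank ℂ V ≤ Module.finrank ℂ ↥(V ⊓ LinearMap.ker g) + Module.finrank ℂ T := by
  have h1 := (g.domRestrict V).finrank_range_add_finrank_ker
  have h2 : Module.finrank ℂ (LinearMap.range (g.domRestrict V)) ≤ Module.finrank ℂ T := by
    rw [LinearMap.range_domRestrict]
    exact Submodule.finrank_mono h
  have h3 : Module.finrank ℂ (LinearMap.ker (g.domRestrict V)) ≤
      Module.finrank ℂ ↥(V ⊓ LinearMap.ker g) := by
    rw [LinearMap.ker_domRestrict, ← Submodule.finrank_map_subtype_eq, Submodule.map_comap_subtype]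
  omega

theorem finrank_le_of_mul_le {T T' : Submodule ℂ Tern} [Module.Finite ℂ T'] (q : Tern)
    (h : ∀ P ∈ T, ∃ τ ∈ T', P = q * τ) : Module.finrank ℂ T ≤ Module.finrank ℂ T' := by
  have h1 : T ≤ T'.map (LinearMap.mulLeft ℂ q) := fun P hP => by
    obtain ⟨τ, hτ, rfl⟩ := h P hP
    exact ⟨τ, hτ, rfl⟩
  exact (Submodule.finrank_mono h1).trans (Submodule.finrank_map_le _ _)

/-- The forms of degree `m` vanishing on `S`. -/
def vanishing (S : Finset (Fin 3 → ℂ)) (m : ℕ) : Submodule ℂ Tern where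
  carrier := {P | P.IsHomogeneous m ∧ ∀ u ∈ S, eval u P = 0}
  zero_mem' := ⟨isHomogeneous_zero _ _ _, by simp⟩
  add_mem' h h' := ⟨h.1.add h'.1, fun u hu => by rw [map_add, h.2 u hu, h'.2 u hu, add_zero]⟩
  smul_mem' c P h := ⟨(homogeneousSubmodule (Fin 3) ℂ m).smul_mem c h.1, fun u hu => by
    rw [smul_eval, h.2 u hu, mul_zero]⟩

instance (S : Finset (Fin 3 → ℂ)) (m : ℕ) : Module.Finite ℂ (vanishing S m) :=
  Submodule.finiteDimensional_of_le
    (show vanishing S m ≤ homogeneousSubmodule (Fin 3) ℂ m from fun _ h => h.1)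

theorem finrank_vanishing_le [DecidableEq (Fin 3 → ℂ)] (S : Finset (Fin 3 → ℂ)) (m : ℕ)
    (z : Fin 3 → ℂ) :
    Module.finrank ℂ (vanishing S m) ≤ Module.finrank ℂ (vanishing (insert z S) m) + 1 := by
  have h1 := finrank_le_finrank_inf_ker_add (aeval z).toLinearMap (V := vanishing S m) (T := ⊤)
    le_top
  rw [finrank_top, Module.finrank_self] at h1
  refine h1.trans (Nat.add_le_add_right (Submodule.finrank_mono fun P hP => ?_) 1)
  refine ⟨hP.1.1, fun u hu => ?_⟩
  rcases Finset.mem_insert.1 hu with rfl | hu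
  exacts [hP.2, hP.1.2 u hu]

section

variable {q : Tern} (hq : q.IsHomogeneous 2)
include hq

theorem exists_finrank_vanishing_le {S : Finset (Fin 3 → ℂ)}
    (hS : Spread (S : Set (Fin 3 → ℂ))) (hSq : ∀ u ∈ S, eval u q = 0) (m e : ℕ) :
    ∃ S' : Finset (Fin 3 → ℂ), Spread (S' : Set (Fin 3 → ℂ)) ∧ (∀ u ∈ S', eval u q = 0) ∧
      S'.card = S.card + e ∧
      Module.finrank ℂ (vanishing S m) ≤ Module.finrank ℂ (vanishing S' m) + e := by
  classical
  induction e with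
  | zero => exact ⟨S, hS, hSq, rfl, le_rfl⟩
  | succ e ih =>
    obtain ⟨S', hS', hSq', hcard, hle⟩ := ih
    obtain ⟨Z, hZinf, hZ, hZ0⟩ := exists_infinite_zeros hq
    obtain ⟨z, hz, hzS⟩ := hZ.exists_avoiding hZinf S'.finite_toSet
    refine ⟨insert z S', ?_, fun u hu => ?_, ?_, ?_⟩
    · rw [Finset.coe_insert]
      exact hS'.insert (hZ.1 z hz) hzS
    · rcases Finset.mem_insert.1 hu with rfl | hu
      exacts [hZ0 _ hz, hSq' u hu]
    · rw [Finset.card_insert_of_notMem fun h => hzS z h 1 (one_smul ℂ z).symm, hcard, add_assoc]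
    · have := finrank_vanishing_le S' m z
      omega

variable (hirr : Irreducible q)
include hirr

theorem dvd_of_dvd_mul_pderiv {τ : Tern} (h : ∀ i, q ∣ τ * pderiv i q) : q ∣ τ := by
  obtain ⟨i, hi⟩ : ∃ i, pderiv i q ≠ 0 := by
    by_contra! hc
    exact hirr.ne_zero (eq_zero_of_isHomogeneous_of_pderiv hq hc)
  refine (hirr.prime.dvd_or_dvd (h i)).resolve_right fun h1 => ?_
  have := le_of_dvd_of_isHomogeneous hq hq.pderiv hi h1
  omega

theorem eval_eq_zero_of_eval_mul_pderiv {u : Fin 3 → ℂ} (hu : u ≠ 0) (huq : eval u q = 0)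
    {τ : Tern} (h : ∀ i, eval u (τ * pderiv i q) = 0) : eval u τ = 0 := by
  obtain ⟨i, hi⟩ := exists_eval_pderiv_ne_zero hq hirr hu huq
  have h1 := h i
  rw [map_mul] at h1
  exact (mul_eq_zero.1 h1).resolve_right hi

variable {S : Finset (Fin 3 → ℂ)} (hS : Spread (S : Set (Fin 3 → ℂ)))
  (hSq : ∀ u ∈ S, eval u q = 0)
include hS hSq

theorem finrank_vanishing_le_choose (m e : ℕ) (hcard : 2 * (m + 2) < S.card + e) :
    Module.finrank ℂ (vanishing S (m + 2)) ≤ (m + 2).choose m + e := by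
  obtain ⟨S', hS', hSq', hcard', hle⟩ := exists_finrank_vanishing_le hq hS hSq (m + 2) e
  have h1 := finrank_le_of_mul_le (T := vanishing S' (m + 2))
    (T' := homogeneousSubmodule (Fin 3) ℂ m) q fun P hP => by
      refine exists_homogeneous_eq_mul hq (add_comm m 2 ▸ hP.1) ?_
      exact conic_dvd_of_card hq hirr hS' hSq' hP.1 hP.2 (by omega)
  rw [finrank_homogeneousSubmodule, show 3 + m - 1 = m + 2 by omega] at h1
  omega

variable {G : ℕ → Submodule ℂ Tern} (hG : ∀ j, ∀ P ∈ G j, P.IsHomogeneous j)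
  (hGS : ∀ j, 4 ≤ j → ∀ P ∈ G j, ∀ u ∈ S, eval u P = 0)
  (hGd : ∀ j, ∀ P ∈ G (j + 1), ∀ i, pderiv i P ∈ G j) (hcard : S.card = 6)
include hG hGS hcard

theorem finrank_four_le : Module.finrank ℂ (G 4) ≤ 9 := by
  have h1 : G 4 ≤ vanishing S 4 := fun P hP => ⟨hG 4 P hP, hGS 4 le_rfl P hP⟩
  exact (Submodule.finrank_mono h1).trans
    (finrank_vanishing_le_choose hq hirr hS hSq 2 3 (by omega))

include hGd

theorem exists_eq_mul_of_mem_five {P : Tern} (hP : P ∈ G 5) : ∃ τ ∈ vanishing S 3, P = q * τ := by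
  obtain ⟨τ, hτ, rfl⟩ := exists_homogeneous_eq_mul (k := 3) hq (hG 5 P hP)
    (conic_dvd_of_pderiv hq hirr hS hSq (hG 5 P hP) (hGS 5 (by omega) P hP)
      (fun i => hGS 4 le_rfl _ (hGd 4 P hP i)) (by omega))
  refine ⟨τ, ⟨hτ, fun u hu => ?_⟩, rfl⟩
  refine eval_eq_zero_of_eval_mul_pderiv hq hirr (hS.1 u hu) (hSq u hu) fun i => ?_
  have h1 := hGS 4 le_rfl _ (hGd 4 _ hP i) u hu
  rw [pderiv_mul, map_add, map_mul, map_mul, hSq u hu] at h1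
  rw [map_mul]
  linear_combination h1

theorem finrank_five_le : Module.finrank ℂ (G 5) ≤ 4 :=
  (finrank_le_of_mul_le q fun _ => exists_eq_mul_of_mem_five hq hirr hS hSq hG hGS hGd hcard).trans
    (finrank_vanishing_le_choose hq hirr hS hSq 1 1 (by omega))

theorem exists_eq_mul_of_mem_six {P : Tern} (hP : P ∈ G 6) :
    ∃ τ ∈ homogeneousSubmodule (Fin 3) ℂ 0, P = q ^ 3 * τ := by
  choose c hc hPc using fun i =>
    exists_eq_mul_of_mem_five hq hirr hS hSq hG hGS hGd hcard (hGd 5 P hP i)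
  obtain ⟨τ, hτ, rfl⟩ := exists_homogeneous_eq_mul (k := 4) hq (hG 6 P hP)
    (dvd_of_dvd_pderiv (hG 6 P hP) fun i => hPc i ▸ dvd_mul_right _ _)
  obtain ⟨σ, hσ, rfl⟩ := exists_homogeneous_eq_mul (k := 2) hq hτ
    (dvd_of_dvd_mul_pderiv hq hirr fun i => by
      have h1 := hPc i
      rw [pderiv_mul] at h1
      exact ⟨c i - pderiv i τ, by linear_combination h1⟩)
  have hc' : ∀ i, c i = 2 * (σ * pderiv i q) + q * pderiv i σ := fun i => by
    have h1 := hPc i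
    rw [pderiv_mul, pderiv_mul] at h1
    exact mul_left_cancel₀ hirr.ne_zero (by linear_combination -h1)
  obtain ⟨ρ, hρ, rfl⟩ := exists_homogeneous_eq_mul (k := 0) hq hσ
    (conic_dvd_of_card hq hirr hS hSq hσ (fun u hu => by
      refine eval_eq_zero_of_eval_mul_pderiv hq hirr (hS.1 u hu) (hSq u hu) fun i => ?_
      have h1 := (hc i).2 u hu
      rw [hc', map_add, map_mul _ q, hSq u hu, map_mul, map_ofNat] at h1
      linear_combination h1 / 2) (by omega))
  exact ⟨ρ, hρ, by ring⟩

theorem finrank_six_le : Module.finrank ℂ (G 6) ≤ 1 := by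
  have h1 := finrank_le_of_mul_le (q ^ 3) fun _ =>
    exists_eq_mul_of_mem_six hq hirr hS hSq hG hGS hGd hcard
  rwa [finrank_homogeneousSubmodule] at h1

theorem eq_zero_of_mem_seven {P : Tern} (hP : P ∈ G 7) : P = 0 := by
  have hd : ∀ i, q ^ 3 ∣ pderiv i P := fun i => by
    obtain ⟨τ, -, hτ⟩ :=
      exists_eq_mul_of_mem_six hq hirr hS hSq hG hGS hGd hcard (hGd 6 P hP i)
    exact hτ ▸ dvd_mul_right _ _
  obtain ⟨l, hl, rfl⟩ := exists_homogeneous_eq_mul (k := 1) (hq.pow 3) (hG 7 P hP)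
    (dvd_of_dvd_pderiv (hG 7 P hP) hd)
  by_contra h0
  have h1 : q ∣ 3 * l := dvd_of_dvd_mul_pderiv hq hirr fun i => by
    obtain ⟨c, hc⟩ := hd i
    rw [pderiv_mul, pderiv_pow] at hc
    refine ⟨c - pderiv i l, mul_left_cancel₀ (pow_ne_zero 2 hirr.ne_zero) ?_⟩
    norm_num at hc
    linear_combination hc
  have h2 : l = C 3⁻¹ * (3 * l) := by
    rw [← mul_assoc, ← map_ofNat C, ← C_mul]
    norm_num
  have := le_of_dvd_of_isHomogeneous hq hl (right_ne_zero_of_mul h0) (h2 ▸ h1.mul_left _)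
  omega

theorem eq_zero_of_mem_of_seven_le {j : ℕ} (hj : 7 ≤ j) {P : Tern} (hP : P ∈ G j) : P = 0 := by
  induction j, hj using Nat.le_induction generalizing P with
  | base => exact eq_zero_of_mem_seven hq hirr hS hSq hG hGS hGd hcard hP
  | succ j _ ih => exact eq_zero_of_isHomogeneous_of_pderiv (hG _ P hP) fun i => ih (hGd j P hP i)

end

namespace Frame

variable (F : Frame) (y : ℂ)

/-- The degree `k` term of the expansion of a polynomial. -/
def jetCoeff (k : ℕ) : MvPolynomial (Fin 5) ℂ →ₗ[ℂ] Tern :=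
  (PowerSeries.coeff (R := Tern) k).restrictScalars ℂ ∘ₗ (F.jet y).toLinearMap

theorem jetCoeff_apply (k : ℕ) (P : MvPolynomial (Fin 5) ℂ) :
    F.jetCoeff y k P = PowerSeries.coeff k (F.jet y P) := rfl

/-- The cubic forms whose expansion has order at least `j`. -/
def cubics : ℕ → Submodule ℂ (MvPolynomial (Fin 5) ℂ)
  | 0 => homogeneousSubmodule (Fin 5) ℂ 3
  | j + 1 => cubics j ⊓ LinearMap.ker (F.jetCoeff y j)

theorem mem_cubics {j : ℕ} {P : MvPolynomial (Fin 5) ℂ} :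
    P ∈ F.cubics y j ↔ P.IsHomogeneous 3 ∧ ∀ k < j, F.jetCoeff y k P = 0 := by
  induction j with
  | zero => simp [cubics]
  | succ j ih =>
    rw [cubics, Submodule.mem_inf, ih, LinearMap.mem_ker, and_assoc, Nat.forall_lt_succ_right]

instance (j : ℕ) : Module.Finite ℂ (F.cubics y j) :=
  Submodule.finiteDimensional_of_le (show F.cubics y j ≤ homogeneousSubmodule (Fin 5) ℂ 3 from
    fun _ h => ((F.mem_cubics y).1 h).1)

/-- The leading terms of degree `j` of expansions of cubic forms. -/
def leading (j : ℕ) : Submodule ℂ Tern := (F.cubics y j).map (F.jetCoeff y j)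

theorem isHomogeneous_of_mem_leading {j : ℕ} {P : Tern} (hP : P ∈ F.leading y j) :
    P.IsHomogeneous j := by
  obtain ⟨Φ, -, rfl⟩ := hP
  exact F.isHomogeneous_coeff_jet y Φ j

instance (j : ℕ) : Module.Finite ℂ (F.leading y j) :=
  Submodule.finiteDimensional_of_le (show F.leading y j ≤ homogeneousSubmodule (Fin 3) ℂ j from
    fun _ h => F.isHomogeneous_of_mem_leading y h)

theorem pderiv_mem_leading {j : ℕ} {P : Tern} (hP : P ∈ F.leading y (j + 1)) (i : Fin 3) :
    pderiv i P ∈ F.leading y j := by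
  obtain ⟨Φ, hΦ, rfl⟩ := hP
  obtain ⟨h3, h0⟩ := (F.mem_cubics y).1 hΦ
  have h1 : ∀ k ≤ j, F.jetCoeff y k (coeffwise (F.D i) Φ) =
      -pderiv i (F.jetCoeff y (k + 1) Φ) := fun k hk => by
    have h2 := F.pderiv_coeff_jet y i k Φ
    rw [← jetCoeff_apply, ← jetCoeff_apply, ← jetCoeff_apply, h0 k (by omega), map_zero,
      zero_sub] at h2
    rw [h2, neg_neg]
  rw [← neg_neg (pderiv i _), ← h1 j le_rfl, ← map_neg]
  refine Submodule.mem_map_of_mem (neg_mem ((F.mem_cubics y).2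
    ⟨isHomogeneous_coeffwise _ h3, fun k hk => ?_⟩))
  rw [h1 k (by omega), h0 (k + 1) (by omega), map_zero, neg_zero]

theorem finrank_cubics_le (j : ℕ) : Module.finrank ℂ (F.cubics y j) ≤
    Module.finrank ℂ (F.cubics y (j + 1)) + Module.finrank ℂ (F.leading y j) :=
  finrank_le_finrank_inf_ker_add _ le_rfl

theorem finrank_leading_le (j : ℕ) : Module.finrank ℂ (F.leading y j) ≤ (3 + j - 1).choose j := by
  rw [← finrank_homogeneousSubmodule]
  exact Submodule.finrank_mono fun _ h => F.isHomogeneous_of_mem_leading y h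

/-- Six lines through the base point in directions on an irreducible conic force a cubic form to
vanish identically along the expansion. -/
theorem exists_cubic_jet_eq_zero {f : MvPolynomial (Fin 5) ℂ} (hf : F.jet y f = 0)
    (h0 : eval (F.pt y) (pderiv 0 f) ≠ 0) (hirr : Irreducible (F.taylor y 2))
    {S : Finset (Fin 3 → ℂ)} (hS : Spread (S : Set (Fin 3 → ℂ))) (hcard : S.card = 6)
    (hSf : ∀ u ∈ S, F.IsLineDir y f u) :
    ∃ Φ : MvPolynomial (Fin 5) ℂ, Φ ≠ 0 ∧ Φ.IsHomogeneous 3 ∧ F.jet y Φ = 0 := by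
  have hq := F.isHomogeneous_taylor y 2
  have hSq : ∀ u ∈ S, eval u (F.taylor y 2) = 0 := fun u hu =>
    (hSf u hu).taylor_eq_zero F y hf h0 le_rfl
  have hG : ∀ j, ∀ P ∈ F.leading y j, P.IsHomogeneous j := fun _ _ =>
    F.isHomogeneous_of_mem_leading y
  have hGS : ∀ j, 4 ≤ j → ∀ P ∈ F.leading y j, ∀ u ∈ S, eval u P = 0 := by
    rintro j hj _ ⟨Φ, hΦ, rfl⟩ u hu
    exact (hSf u hu).coeff_jet_eq_zero F y hf h0 ((F.mem_cubics y).1 hΦ).1 hj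
  have hGd : ∀ j, ∀ P ∈ F.leading y (j + 1), ∀ i, pderiv i P ∈ F.leading y j := fun _ _ =>
    F.pderiv_mem_leading y
  have h35 : Module.finrank ℂ (F.cubics y 0) = 35 := finrank_homogeneousSubmodule 5 3
  have hc : ∀ j k, j + 1 = k → Module.finrank ℂ (F.cubics y j) ≤
      Module.finrank ℂ (F.cubics y k) + Module.finrank ℂ (F.leading y j) := by
    rintro j _ rfl
    exact F.finrank_cubics_le y j
  have l0 : _ ≤ 1 := F.finrank_leading_le y 0
  have l1 : _ ≤ 3 := F.finrank_leading_le y 1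
  have l2 : _ ≤ 6 := F.finrank_leading_le y 2
  have l3 : _ ≤ 10 := F.finrank_leading_le y 3
  have l4 := finrank_four_le hq hirr hS hSq hG hGS hcard
  have l5 := finrank_five_le hq hirr hS hSq hG hGS hGd hcard
  have l6 := finrank_six_le hq hirr hS hSq hG hGS hGd hcard
  have h7 : Module.finrank ℂ (F.cubics y 7) ≠ 0 := by
    have := hc 0 1 rfl
    have := hc 1 2 rfl
    have := hc 2 3 rfl
    have := hc 3 4 rfl
    have := hc 4 5 rfl
    have := hc 5 6 rfl
    have := hc 6 7 rfl
    omega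
  obtain ⟨Φ, hΦ, hΦ0⟩ := Submodule.exists_mem_ne_zero_of_ne_bot (p := F.cubics y 7)
    fun h => h7 (by rw [h, finrank_bot])
  have hmem : ∀ j, Φ ∈ F.cubics y (7 + j) := fun j => by
    induction j with
    | zero => exact hΦ
    | succ j ih => exact ⟨ih, eq_zero_of_mem_of_seven_le hq hirr hS hSq hG hGS hGd hcard
        (by omega : 7 ≤ 7 + j) (Submodule.mem_map_of_mem ih)⟩
  refine ⟨Φ, hΦ0, ((F.mem_cubics y).1 hΦ).1, PowerSeries.ext fun k => ?_⟩
  rw [map_zero]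
  exact ((F.mem_cubics y).1 (hmem (k + 1))).2 k (by omega)

end Frame

namespace Frame

variable (F : Frame) (y : ℂ)

theorem lines_le_six {f : MvPolynomial (Fin 5) ℂ} {n : ℕ} (hhom : f.IsHomogeneous n)
    (hirr : Irreducible f) (hdeg : (finSuccEquiv ℂ 4 f).natDegree ≠ 0) (hf : F.jet y f = 0)
    (h0 : eval (F.pt y) (pderiv 0 f) ≠ 0)
    (hfin : ∀ T : Set (Fin 3 → ℂ), Spread T → (∀ u ∈ T, F.IsLineDir y f u) → T.Finite)
    {S : Finset (Fin 3 → ℂ)} (hS : Spread (S : Set (Fin 3 → ℂ)))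
    (hSf : ∀ u ∈ S, F.IsLineDir y f u) : S.card ≤ 6 ∧ (S.card = 6 → n = 3) := by
  have hS2 : ∀ u ∈ S, eval u (F.taylor y 2) = 0 := fun u hu =>
    (hSf u hu).taylor_eq_zero F y hf h0 le_rfl
  have hS3 : ∀ u ∈ S, eval u (F.taylor y 3) = 0 := fun u hu =>
    (hSf u hu).taylor_eq_zero F y hf h0 (by omega)
  have hno : ¬ ∃ (h : Tern) (e : ℕ), h.IsHomogeneous (e + 1) ∧ ∀ k, 2 ≤ k → h ∣ F.taylor y k := by
    rintro ⟨h, e, hh, hd⟩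
    obtain ⟨T, hTinf, hT, hT0⟩ := exists_infinite_zeros hh
    refine hTinf (hfin T hT fun u hu => F.isLineDir_of_taylor y hf fun k hk => ?_)
    obtain ⟨τ, hτ⟩ := hd k hk
    rw [hτ, map_mul, hT0 u hu, zero_mul]
  refine ⟨?_, fun hcard => le_antisymm ?_ ?_⟩
  · by_contra! hcard
    exact hno (F.exists_dvd_taylor y hS hS2 hS3 (by omega) fun _ => by omega)
  · have hq : Irreducible (F.taylor y 2) := by
      by_contra hq
      exact hno (F.exists_dvd_taylor y hS hS2 hS3 (by omega) fun h => absurd h hq)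
    obtain ⟨Φ, hΦ0, hΦ, hjet⟩ := F.exists_cubic_jet_eq_zero y hf h0 hq hS hcard hSf
    exact le_of_dvd_of_isHomogeneous hhom hΦ hΦ0
      (F.dvd_of_jet_eq_zero y hhom hirr hdeg hΦ hf hjet)
  · by_contra! hn
    obtain ⟨T, hTinf, hT, hT0⟩ := exists_infinite_zeros (F.isHomogeneous_taylor y 2)
    exact hTinf (hfin T hT fun u hu =>
      F.isLineDir_of_taylor_two y hf (by omega) hhom (hT0 u hu))

end Frame

theorem natDegree_finSuccEquiv_ne_zero {f : MvPolynomial (Fin 5) ℂ} (h : pderiv 0 f ≠ 0) :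
    (finSuccEquiv ℂ 4 f).natDegree ≠ 0 := by
  rw [natDegree_finSuccEquiv]
  contrapose! h
  exact pderiv_eq_zero_of_notMem_vars fun hv => mem_vars_iff_degreeOf_ne_zero.1 hv h

/-- A point of the hypersurface avoiding finitely many other hypersurfaces, together with a frame
killing all the coefficients involved. -/
theorem exists_generic_point {f : MvPolynomial (Fin 5) ℂ} {n : ℕ} (hhom : f.IsHomogeneous n)
    (hirr : Irreducible f) (hd : pderiv 0 f ≠ 0) (G : Finset (MvPolynomial (Fin 5) ℂ))
    (hG : ∀ g ∈ G, ∃ k, g.IsHomogeneous k) :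
    ∃ (F : Frame) (y : ℂ), F.jet y f = 0 ∧ ∀ g ∈ G, ¬ f ∣ g → eval (F.pt y) g ≠ 0 := by
  have hdeg := natDegree_finSuccEquiv_ne_zero hd
  obtain ⟨F, hF⟩ := exists_frame
    (Set.range (fun m => coeff m f) ∪ ⋃ g ∈ G, Set.range fun m => coeff m g)
    ((Set.countable_range _).union
      (G.countable_toSet.biUnion fun g _ => Set.countable_range fun m => coeff m g))
  have hFf : F.IsConst f := fun i m => hF i _ (.inl ⟨m, rfl⟩)
  have hFG : ∀ g ∈ G, F.IsConst g := fun g hg i m =>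
    hF i _ (.inr (Set.mem_biUnion hg ⟨m, rfl⟩))
  set b := (finSuccEquiv ℂ 4 f).leadingCoeff with hb
  have hb0 : eval (Fin.cons 1 F.p : Fin 4 → ℂ) b ≠ 0 := by
    intro h0
    have hconst : F.IsConst (rename Fin.succ b) := fun i m => by
      by_cases hm : coeff m (rename Fin.succ b) = 0
      · rw [hm, map_zero]
      · obtain ⟨m', rfl, -⟩ := coeff_rename_ne_zero _ _ _ hm
        rw [coeff_rename_mapDomain _ (Fin.succ_injective 4), hb, Polynomial.leadingCoeff,
          finSuccEquiv_coeff_coeff]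
        exact hFf i _
    have hbhom : b.IsHomogeneous (n - (finSuccEquiv ℂ 4 f).natDegree) := by
      refine hhom.finSuccEquiv_coeff_isHomogeneous _ _ (Nat.add_sub_of_le ?_)
      rw [natDegree_finSuccEquiv]
      exact (degreeOf_le_totalDegree f 0).trans hhom.totalDegree_le
    refine (Polynomial.leadingCoeff_ne_zero.2 ?_ : b ≠ 0)
      (F.eq_zero_of_jet_rename_succ 0 hbhom (F.jet_eq_zero 0 hconst ?_))
    · exact (map_ne_zero_iff _ (finSuccEquiv ℂ 4).injective).2 hirr.ne_zero
    · rw [eval_rename]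
      exact h0
  obtain ⟨y, hy⟩ := IsAlgClosed.exists_root
    (Polynomial.map (eval (Fin.cons 1 F.p : Fin 4 → ℂ)) (finSuccEquiv ℂ 4 f)) (by
      rw [Polynomial.degree_map_eq_of_leadingCoeff_ne_zero _ hb0]
      exact fun h => hdeg (Polynomial.natDegree_eq_zero_iff_degree_le_zero.2 h.le))
  have hjet : F.jet y f = 0 := F.jet_eq_zero y hFf (by
    rw [Frame.pt, eval_eq_eval_mv_eval']
    exact hy)
  refine ⟨F, y, hjet, fun g hg hfg h0 => hfg ?_⟩
  obtain ⟨k, hk⟩ := hG g hg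
  exact F.dvd_of_jet_eq_zero y hhom hirr hdeg hk hjet (F.jet_eq_zero y (hFG g hg) h0)

theorem notMem_zeroLocusP_mk {g : MvPolynomial (Fin 5) ℂ} {v : Fin 5 → ℂ} (hv : v ≠ 0)
    (h : eval v g ≠ 0) : Projectivization.mk ℂ v hv ∉ zeroLocusP g := fun h1 =>
  h (h1 v (by rw [Projectivization.submodule_mk]; exact Submodule.mem_span_singleton_self v))

theorem mk_mem_zeroLocusP {g : MvPolynomial (Fin 5) ℂ} {n : ℕ} (hg : g.IsHomogeneous n)
    {v : Fin 5 → ℂ} (hv : v ≠ 0) (h : eval v g = 0) :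
    Projectivization.mk ℂ v hv ∈ zeroLocusP g := fun w hw => by
  rw [Projectivization.submodule_mk, Submodule.mem_span_singleton] at hw
  obtain ⟨c, rfl⟩ := hw
  rw [eval_smul_of_isHomogeneous hg, h, mul_zero]

theorem mk_mem_projSet {W : Submodule ℂ (Fin 5 → ℂ)} {v : Fin 5 → ℂ} (hv : v ≠ 0) :
    Projectivization.mk ℂ v hv ∈ projSet W ↔ v ∈ W := by
  change (Projectivization.mk ℂ v hv).submodule ≤ W ↔ v ∈ W
  rw [Projectivization.submodule_mk, Submodule.span_singleton_le_iff_mem]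

theorem eval_eq_zero_of_projSet_subset {W : Submodule ℂ (Fin 5 → ℂ)}
    {g : MvPolynomial (Fin 5) ℂ} (h : projSet W ⊆ zeroLocusP g) {v : Fin 5 → ℂ} (hv : v ∈ W)
    (hv0 : v ≠ 0) : eval v g = 0 :=
  h ((mk_mem_projSet hv0).2 hv) v (by
    rw [Projectivization.submodule_mk]; exact Submodule.mem_span_singleton_self v)

theorem projSet_le {W W' : Submodule ℂ (Fin 5 → ℂ)} (h : projSet W = projSet W') : W ≤ W' := by
  intro v hv
  by_cases hv0 : v = 0
  · rw [hv0]; exact W'.zero_mem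
  · exact (mk_mem_projSet hv0).1 (h ▸ (mk_mem_projSet hv0).2 hv)

/-- Neighbourhoods in the Zariski topology contain complements of finitely many hypersurfaces. -/
theorem exists_finset_of_isOpen {W : Set P4} (hW : zariskiP4.IsOpen W) {x : P4} (hx : x ∈ W) :
    ∃ G : Finset (MvPolynomial (Fin 5) ℂ), (∀ g ∈ G, ∃ k, g.IsHomogeneous k) ∧
      (∀ g ∈ G, x ∉ zeroLocusP g) ∧ ∀ x', (∀ g ∈ G, x' ∉ zeroLocusP g) → x' ∈ W := by
  classical
  induction hW with
  | basic s hs =>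
    obtain ⟨k, g, hg, rfl⟩ := hs
    exact ⟨{g}, by simpa using ⟨k, hg⟩, by simpa using hx, by simp⟩
  | univ => exact ⟨∅, by simp, by simp, by simp⟩
  | inter s t _ _ hs ht =>
    obtain ⟨G, h1, h2, h3⟩ := hs hx.1
    obtain ⟨G', h1', h2', h3'⟩ := ht hx.2
    refine ⟨G ∪ G', ?_, ?_, fun x' h => ⟨h3 x' ?_, h3' x' ?_⟩⟩
    · exact fun g hg => (Finset.mem_union.1 hg).elim (h1 g) (h1' g)
    · exact fun g hg => (Finset.mem_union.1 hg).elim (h2 g) (h2' g)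
    · exact fun g hg => h g (Finset.mem_union_left _ hg)
    · exact fun g hg => h g (Finset.mem_union_right _ hg)
  | sUnion S _ ih =>
    obtain ⟨s, hs, hxs⟩ := hx
    obtain ⟨G, h1, h2, h3⟩ := ih s hs hxs
    exact ⟨G, h1, h2, fun x' h => ⟨s, hs, h3 x' h⟩⟩

theorem pt_ne_zero (F : Frame) (y : ℂ) : F.pt y ≠ 0 := fun h => by
  have := congrFun h 1
  simp [Frame.pt] at this

theorem eval_dir_eq_zero {f : MvPolynomial (Fin 5) ℂ} {n : ℕ} (hhom : f.IsHomogeneous n)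
    {v d : Fin 5 → ℂ} (h : ∀ t : ℂ, eval (v + t • d) f = 0) (a b : ℂ) :
    eval (a • v + b • d) f = 0 := by
  have h1 : ∀ a : ℂ, a ≠ 0 → eval (a • v + b • d) f = 0 := fun a ha => by
    have h2 : a • v + b • d = a • (v + (a⁻¹ * b) • d) := by
      rw [smul_add, smul_smul, ← mul_assoc, mul_inv_cancel₀ ha, one_mul]
    rw [h2, eval_smul_of_isHomogeneous hhom, h, mul_zero]
  have h3 : Continuous fun a : ℂ => eval (a • v + b • d) f :=
    (continuous_eval f).comp (by fun_prop)
  exact congrFun (h3.ext_on (dense_compl_singleton (0 : ℂ)) continuous_const h1) a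

section

variable (F : Frame) (y : ℂ) (e : (Fin 5 → ℂ) ≃ₗ[ℂ] (Fin 5 → ℂ))

/-- The plane spanned by the base point and the direction determined by `u`. -/
def plane (u : Fin 3 → ℂ) : Submodule ℂ (Fin 5 → ℂ) :=
  Submodule.span ℂ {e (F.pt y), e (dir (eval u (F.taylor y 1)) u)}

theorem eval_smul_taylor_one (c : ℂ) (u : Fin 3 → ℂ) :
    dir (eval (c • u) (F.taylor y 1)) (c • u) = c • dir (eval u (F.taylor y 1)) u := by
  rw [eval_smul_of_isHomogeneous (F.isHomogeneous_taylor y 1), pow_one]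
  funext i
  refine Fin.cases ?_ (fun i => Fin.cases ?_ (fun i => ?_) i) i <;> simp [dir]

theorem plane_smul {c : ℂ} (hc : c ≠ 0) (u : Fin 3 → ℂ) : plane F y e (c • u) = plane F y e u := by
  rw [plane, plane, eval_smul_taylor_one, map_smul, Submodule.span_insert, Submodule.span_insert,
    Submodule.span_singleton_smul_eq (IsUnit.mk0 c hc)]

theorem mem_plane {u : Fin 3 → ℂ} {v : Fin 5 → ℂ} : v ∈ plane F y e u ↔
    ∃ a b : ℂ, v = e (a • F.pt y + b • dir (eval u (F.taylor y 1)) u) := by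
  rw [plane, Submodule.mem_span_pair]
  simp only [map_add, map_smul, eq_comm]

theorem eq_smul_of_plane_le {u u' : Fin 3 → ℂ} (h : plane F y e u ≤ plane F y e u') :
    ∃ c : ℂ, u = c • u' := by
  obtain ⟨a, b, hab⟩ := (mem_plane F y e).1 (h ((mem_plane F y e).2 ⟨0, 1, rfl⟩))
  have h1 := e.injective hab
  rw [zero_smul, one_smul, zero_add] at h1
  have ha : a = 0 := by
    have := congrFun h1 1
    simpa [dir, Frame.pt, eq_comm] using this
  refine ⟨b, funext fun i => ?_⟩
  have := congrFun h1 i.succ.succ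
  simpa [dir, ha] using this

theorem finrank_plane {u : Fin 3 → ℂ} (hu : u ≠ 0) : Module.finrank ℂ (plane F y e u) = 2 := by
  have h1 : LinearIndependent ℂ ![e (F.pt y), e (dir (eval u (F.taylor y 1)) u)] := by
    refine LinearIndependent.pair_iff.2 fun a b hab => ?_
    rw [← map_smul, ← map_smul, ← map_add, e.map_eq_zero_iff] at hab
    have ha : a = 0 := by simpa [dir, Frame.pt] using congrFun hab 1
    refine ⟨ha, by_contra fun hb => hu (funext fun i => ?_)⟩
    have := congrFun hab i.succ.succ
    simpa [dir, ha, hb] using this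
  have h2 := finrank_span_eq_card h1
  rwa [Matrix.range_cons, Matrix.range_cons, Matrix.range_empty, Set.union_empty,
    Set.singleton_union] at h2

variable {F y e}
variable {f f' : MvPolynomial (Fin 5) ℂ} 
  (he : ∀ v, eval (e v) f = eval v f') (hf : F.jet y f' = 0)
  (h0 : eval (F.pt y) (pderiv 0 f') ≠ 0) {x : P4}
  (hx : ∃ h, x = Projectivization.mk ℂ (e (F.pt y)) h)
include he hf h0 hx

theorem exists_plane_eq {L : Set P4} (hL : IsLine L) (hxL : x ∈ L) (hLf : L ⊆ zeroLocusP f) :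
    ∃ u : Fin 3 → ℂ, u ≠ 0 ∧ F.IsLineDir y f' u ∧ projSet (plane F y e u) = L := by
  obtain ⟨W, hW, rfl⟩ := hL
  obtain ⟨h, rfl⟩ := hx
  rw [mk_mem_projSet] at hxL
  let χ : W →ₗ[ℂ] ℂ := LinearMap.proj 1 ∘ₗ e.symm.toLinearMap ∘ₗ W.subtype
  obtain ⟨⟨d, hdW⟩, hd, hd0⟩ := Submodule.exists_mem_ne_zero_of_ne_bot
    (LinearMap.ker_ne_bot_of_finrank_lt (f := χ) (by rw [hW]; simp))
  replace hd : e.symm d 1 = 0 := hd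
  replace hd0 : d ≠ 0 := fun h => hd0 (Subtype.ext h)
  set w := e.symm d 0 with hw
  set u : Fin 3 → ℂ := fun i => e.symm d i.succ.succ with hu
  have hdir : e.symm d = dir w u := by
    funext i
    refine Fin.cases ?_ (fun i => Fin.cases ?_ (fun i => ?_) i) i
    · simp [dir, hw]
    · simpa [dir] using hd
    · simp [dir, hu]
  have hde : d = e (dir w u) := by rw [← hdir, e.apply_symm_apply]
  have hline : ∀ t : ℂ, eval (F.pt y + t • dir w u) f' = 0 := fun t => by
    rw [← he]
    refine eval_eq_zero_of_projSet_subset hLf ?_ ?_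
    · rw [map_add, map_smul, ← hde]
      exact W.add_mem hxL (W.smul_mem t hdW)
    · rw [ne_eq, e.map_eq_zero_iff]
      intro h
      have := congrFun h 1
      simp [Frame.pt, dir] at this
  have hw1 := F.eq_taylor_one_of_line y hf h0 hline
  have hu0 : u ≠ 0 := by
    intro hu0
    rw [hw1, hu0, ← zero_smul ℂ (0 : Fin 3 → ℂ), eval_smul_taylor_one, zero_smul, map_zero] at hde
    exact hd0 hde
  refine ⟨u, hu0, ⟨w, hline⟩, congrArg projSet ?_⟩
  have hle : plane F y e u ≤ W := Submodule.span_le.2 (by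
    rw [← hw1, ← hde]
    rintro v (rfl | rfl)
    exacts [hxL, hdW])
  have : Module.Finite ℂ W := Module.finite_of_finrank_eq_succ hW
  exact Submodule.eq_of_le_of_finrank_eq hle ((finrank_plane F y e hu0).trans hW.symm)

theorem exists_spread
    (hfin : {L : Set P4 | IsLine L ∧ x ∈ L ∧ L ⊆ zeroLocusP f}.Finite) :
    ∃ S : Finset (Fin 3 → ℂ), Spread (S : Set (Fin 3 → ℂ)) ∧ (∀ u ∈ S, F.IsLineDir y f' u) ∧
      S.card = {L : Set P4 | IsLine L ∧ x ∈ L ∧ L ⊆ zeroLocusP f}.ncard := by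
  classical
  have hex : ∀ L : Set P4, L ∈ {L : Set P4 | IsLine L ∧ x ∈ L ∧ L ⊆ zeroLocusP f} →
      ∃ u : Fin 3 → ℂ, u ≠ 0 ∧ F.IsLineDir y f' u ∧ projSet (plane F y e u) = L :=
    fun L hL => exists_plane_eq he hf h0 hx hL.1 hL.2.1 hL.2.2
  choose! g hg0 hgf hg using hex
  refine ⟨hfin.toFinset.image g, ⟨?_, ?_⟩, ?_, ?_⟩
  · intro u hu
    obtain ⟨L, hL, rfl⟩ := Finset.mem_image.1 hu
    exact hg0 L (hfin.mem_toFinset.1 hL)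
  · intro u hu v hv c hc
    obtain ⟨L, hL, rfl⟩ := Finset.mem_image.1 hu
    obtain ⟨L', hL', rfl⟩ := Finset.mem_image.1 hv
    rw [hfin.mem_toFinset] at hL hL'
    have hc0 : c ≠ 0 := by
      rintro rfl
      exact hg0 L hL (by rw [hc, zero_smul])
    rw [← hg L hL, ← hg L' hL', hc, plane_smul F y e hc0]
  · intro u hu
    obtain ⟨L, hL, rfl⟩ := Finset.mem_image.1 hu
    exact hgf L (hfin.mem_toFinset.1 hL)
  · rw [Finset.card_image_of_injOn, Set.ncard_eq_toFinset_card _ hfin]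
    intro L hL L' hL' h
    rw [Finset.mem_coe, hfin.mem_toFinset] at hL hL'
    rw [← hg L hL, ← hg L' hL', h]

variable {n : ℕ} (hhom : f'.IsHomogeneous n)
include hhom

theorem plane_line {u : Fin 3 → ℂ} (hu : u ≠ 0) (h : F.IsLineDir y f' u) :
    IsLine (projSet (plane F y e u)) ∧ x ∈ projSet (plane F y e u) ∧
      projSet (plane F y e u) ⊆ zeroLocusP f := by
  refine ⟨⟨_, finrank_plane F y e hu, rfl⟩, ?_, fun p hp v hv => ?_⟩
  · obtain ⟨h, rfl⟩ := hx
    exact (mk_mem_projSet h).2 ((mem_plane F y e).2 ⟨1, 0, by simp⟩)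
  · obtain ⟨a, b, rfl⟩ := (mem_plane F y e).1 (hp hv)
    obtain ⟨w, hw⟩ := h
    obtain rfl := F.eq_taylor_one_of_line y hf h0 hw
    rw [he, eval_dir_eq_zero hhom hw]

theorem finite_of_spread
    (hfin : {L : Set P4 | IsLine L ∧ x ∈ L ∧ L ⊆ zeroLocusP f}.Finite) (T : Set (Fin 3 → ℂ))
    (hT : Spread T) (hTf : ∀ u ∈ T, F.IsLineDir y f' u) : T.Finite := by
  refine Set.Finite.of_injOn (f := fun u => projSet (plane F y e u))
    (fun u hu => plane_line he hf h0 hx hhom (hT.1 u hu) (hTf u hu)) (fun u hu u' hu' h => ?_) hfin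
  obtain ⟨c, hc⟩ := eq_smul_of_plane_le F y e (projSet_le h)
  exact hT.2 u hu u' hu' c hc

end

theorem exists_pderiv_ne_zero_of_irreducible {f : MvPolynomial (Fin 5) ℂ} {n : ℕ}
    (hhom : f.IsHomogeneous n) (hirr : Irreducible f) : n ≠ 0 ∧ ∃ i, pderiv i f ≠ 0 := by
  cases n with
  | zero =>
    refine absurd ?_ hirr.not_isUnit
    have h1 := totalDegree_eq_zero_iff_eq_C.1 (Nat.le_zero.1 hhom.totalDegree_le)
    rw [h1]
    refine (IsUnit.mk0 _ fun h => hirr.ne_zero ?_).map C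
    rw [h1, h, C_0]
  | succ n =>
    refine ⟨n.succ_ne_zero, by_contra fun h => hirr.ne_zero ?_⟩
    push Not at h
    exact eq_zero_of_isHomogeneous_of_pderiv hhom h

theorem not_dvd_of_notMem_zeroLocusP {f g : MvPolynomial (Fin 5) ℂ} {x : P4}
    (hx : x ∈ zeroLocusP f) (hg : x ∉ zeroLocusP g) : ¬ f ∣ g := by
  rintro ⟨q, rfl⟩
  exact hg fun v hv => by rw [map_mul, hx v hv, zero_mul]

/-- Relatively open dense subsets of an integral hypersurface contain points at which a given
derivative is nonzero, and which can be moved along a generic frame. -/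
theorem exists_generic_point_mem {f : MvPolynomial (Fin 5) ℂ} {n : ℕ} (hhom : f.IsHomogeneous n)
    (hirr : Irreducible f) {U : Set P4} (hU : GenericInT zariskiP4 (zeroLocusP f) U) :
    ∃ (f' : MvPolynomial (Fin 5) ℂ) (e : (Fin 5 → ℂ) ≃ₗ[ℂ] (Fin 5 → ℂ)) (F : Frame) (y : ℂ),
      f'.IsHomogeneous n ∧ Irreducible f' ∧ pderiv 0 f' ≠ 0 ∧ (∀ v, eval (e v) f = eval v f') ∧
      F.jet y f' = 0 ∧ eval (F.pt y) (pderiv 0 f') ≠ 0 ∧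
      ∃ x ∈ U, ∃ h, x = Projectivization.mk ℂ (e (F.pt y)) h := by
  classical
  obtain ⟨hn, i, hi⟩ := exists_pderiv_ne_zero_of_irreducible hhom hirr
  set σ : Fin 5 ≃ Fin 5 := Equiv.swap 0 i
  set ρ := renameEquiv ℂ σ
  have hρa : ∀ g, ρ g = rename σ g := fun g => rfl
  set e : (Fin 5 → ℂ) ≃ₗ[ℂ] (Fin 5 → ℂ) := LinearEquiv.funCongrLeft ℂ ℂ σ
  have he : ∀ g v, eval (e v) g = eval v (ρ g) := fun g v => by
    rw [hρa, eval_rename]; rfl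
  have hhom' : (ρ f).IsHomogeneous n := hhom.rename_isHomogeneous
  have hirr' : Irreducible (ρ f) := (MulEquiv.irreducible_iff ρ).2 hirr
  have hd : pderiv 0 (ρ f) ≠ 0 := by
    have h1 : pderiv (σ i) (rename σ f) = ρ (pderiv i f) := pderiv_rename σ.injective i f
    rw [Equiv.swap_apply_right] at h1
    rw [hρa, h1]
    exact (EmbeddingLike.map_ne_zero_iff (f := ρ)).2 hi
  have hne : ∀ (F : Frame) (y : ℂ), e (F.pt y) ≠ 0 := fun F y =>
    e.map_ne_zero_iff.2 (pt_ne_zero F y)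
  have hmem : ∀ (F : Frame) (y : ℂ), F.jet y (ρ f) = 0 →
      Projectivization.mk ℂ (e (F.pt y)) (hne F y) ∈ zeroLocusP f := fun F y hF => by
    refine mk_mem_zeroLocusP hhom (hne F y) ?_
    rw [he, ← C_eq_zero (σ := Fin 3), ← F.coeff_zero_jet y, hF, map_zero]
  obtain ⟨-, ⟨W, hW, rfl⟩, hdense⟩ := hU
  obtain ⟨F₀, y₀, hF₀, -⟩ := exists_generic_point hhom' hirr' hd ∅ (by simp)
  obtain ⟨x₀, ⟨hx₀, hx₀W⟩, -⟩ := hdense Set.univ (@isOpen_univ _ zariskiP4)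
    ⟨_, hmem F₀ y₀ hF₀, trivial⟩
  obtain ⟨G, hG, hG₀, hGW⟩ := exists_finset_of_isOpen hW hx₀W
  obtain ⟨F, y, hF, hFG⟩ := exists_generic_point hhom' hirr' hd
    (insert (pderiv 0 (ρ f)) (G.image ρ)) (by
      intro g hg
      rcases Finset.mem_insert.1 hg with rfl | hg
      · exact ⟨_, hhom'.pderiv⟩
      · obtain ⟨g', hg', rfl⟩ := Finset.mem_image.1 hg
        exact (hG g' hg').imp fun k hk => hk.rename_isHomogeneous)
  refine ⟨ρ f, e, F, y, hhom', hirr', hd, he f, hF, hFG _ (Finset.mem_insert_self _ _) fun h => ?_,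
    _, ⟨hmem F y hF, hGW _ fun g hg => notMem_zeroLocusP_mk (hne F y) ?_⟩, hne F y, rfl⟩
  · have := le_of_dvd_of_isHomogeneous hhom' hhom'.pderiv hd h
    omega
  · rw [he]
    refine hFG _ (Finset.mem_insert_of_mem (Finset.mem_image_of_mem ρ hg)) fun h => ?_
    exact not_dvd_of_notMem_zeroLocusP hx₀ (hG₀ g hg) ((map_dvd_iff ρ).1 h)

end GeneralLines

/-- Landsberg / Segre.  Let `X = {f = 0} ⊂ ℙ⁴` be an
integral hypersurface (with `f` a nonzero irreducible homogeneous polynomial)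
such that through a general point of `X` — i.e. through every point of a
dense (relatively) Zariski-open subset `U` of `X` — there pass only finitely
many lines contained in `X`, this number being constant equal to `d` on `U`.
Then `d ≤ 6`, and if `d = 6` then `X` is a (not necessarily smooth) cubic. -/
theorem lines_through_general_point_le_six
    (f : MvPolynomial (Fin 5) ℂ) (n : ℕ)
    (hhom : f.IsHomogeneous n) (hne : f ≠ 0) (hirr : Irreducible f)
    (d : ℕ) (U : Set P4)
    (hU : GenericInT zariskiP4 (zeroLocusP f) U)
    (hd : ∀ x ∈ U,
      {L : Set P4 | IsLine L ∧ x ∈ L ∧ L ⊆ zeroLocusP f}.Finite ∧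
      {L : Set P4 | IsLine L ∧ x ∈ L ∧ L ⊆ zeroLocusP f}.ncard = d) :
    d ≤ 6 ∧ (d = 6 → n = 3) := by
  obtain ⟨f', e, F, y, hhom', hirr', hd', he, hF, h0, x, hxU, hx⟩ :=
    GeneralLines.exists_generic_point_mem hhom hirr hU
  obtain ⟨hfin, hcard⟩ := hd x hxU
  obtain ⟨S, hS, hSf, hSc⟩ := GeneralLines.exists_spread he hF h0 hx hfin
  rw [← hcard, ← hSc]
  exact F.lines_le_six y hhom' hirr' (GeneralLines.natDegree_finSuccEquiv_ne_zero hd') hF h0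
    (GeneralLines.finite_of_spread he hF h0 hx hhom' hfin) hS hSf
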